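/- Let (H, g) be a finite type unimodular pivotal Hopf G-coalgebra over a field k and let t be a cyclic trace on H-pmod. Then t is a right modified trace if and only if for all α, β ∈ G and every H_{αβ}-linear endomorphism f of H_α ⊗ H_β (the tensor product of the left regular modules, with H_{αβ}-action via Δ_{α,β}) one has t_{H_α⊗H_β}(f) = t_{H_α}(tr^r_{H_β}(f)). Similarly, t is a left modified trace if and only if t_{H_α⊗H_β}(f) = t_{H_β}(tr^l_{H_α}(f)) for all such f. -/

import Mathlib

/-!
A modified trace satisfies the regular condition because regular modules are projective and
finite-dimensional; the content is the converse.

*Right traces, `W` projective.* A finite-dimensional projective module is a summand of a power of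
the regular module, so `id_P = ∑ bᵢ aᵢ` and `id_W = ∑ dⱼ cⱼ` with all maps passing through regular
modules (`exists_dual_basis`). Cyclicity of `t` moves `bᵢ ⊗ dⱼ` around, the regular condition
applies, and naturality of the partial trace (`trR_natural`) reassembles the sums; this is
`right_projective`. The argument needs that the partial trace of an `H_{αβ}`-linear map is
`H_α`-linear (`trR_linear`), which comes from the antipode identities and the fact that the pivot
implements the square of the antipode.

*Right traces, `W` arbitrary.* Since `P` is projective, `id ⊗ ε : P ⊗ H₁ → P` splits, which makes
`P ⊗ W` a summand of `P ⊗ (H₁ ⊗ W)`. Here `H₁ ⊗ W` is free, being isomorphic to the module with the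
action on the first factor only (`untwist`), so the previous case applies. The pivot is grouplike,
hence the partial trace over `H₁ ⊗ W` is the composite of those over `W` and over `H₁`
(`trR_assoc`), and applying the previous case to `P ⊗ H₁` gives `right_general`.

*Left traces.* Flipping the coproducts gives a Hopf coalgebra over the opposite group, whose
antipode is `S⁻¹ = g⁻¹ S(·) g` and whose pivot is `g⁻¹` (`cop`, `cop_pivot`). The flip of tensor
factors turns left partial traces into right ones for this coopposite (`trRH_cop`), and the left
statement follows from the right one.

All indices are handled up to equality: coproducts are taken as maps `H_γ → H_α ⊗ H_β` for any
`γ = αβ`, and similarly for antipodes, so that no transports appear in the computations.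
-/

open scoped TensorProduct

/-- Transport along an equality of indices, as an algebra isomorphism. -/
def castAlg (k : Type) [CommSemiring k] {G : Type} {H : G → Type}
    [∀ γ : G, Ring (H γ)] [∀ γ : G, Algebra k (H γ)]
    {γ γ' : G} (h : γ = γ') : H γ ≃ₐ[k] H γ' := by
  subst h; exact AlgEquiv.refl

/-- A Hopf `G`-coalgebra over a field `k`. -/
structure HopfGCoalgebra (k G : Type) [Field k] [Group G] (H : G → Type)
    [∀ γ : G, Ring (H γ)] [∀ γ : G, Algebra k (H γ)] where
  Δ : ∀ α β : G, H (α * β) →ₐ[k] (H α ⊗[k] H β)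
  ε : H (1 : G) →ₐ[k] k
  S : ∀ γ : G, H γ →ₗ[k] H γ⁻¹
  coassoc : ∀ (α β γ : G) (x : H (α * β * γ)),
    (TensorProduct.map (Δ α β).toLinearMap LinearMap.id) (Δ (α * β) γ x)
      = (TensorProduct.assoc k (H α) (H β) (H γ)).symm
          ((TensorProduct.map LinearMap.id (Δ β γ).toLinearMap)
            (Δ α (β * γ) (castAlg k (mul_assoc α β γ) x)))
  counit_right : ∀ (α : G) (x : H (α * 1)),
    (TensorProduct.rid k (H α)) ((TensorProduct.map LinearMap.id ε.toLinearMap) (Δ α 1 x))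
      = castAlg k (mul_one α) x
  counit_left : ∀ (α : G) (x : H (1 * α)),
    (TensorProduct.lid k (H α)) ((TensorProduct.map ε.toLinearMap LinearMap.id) (Δ 1 α x))
      = castAlg k (one_mul α) x
  antipode_left : ∀ (α : G) (x : H (α⁻¹ * α)),
    (LinearMap.mul' k (H α))
      ((TensorProduct.map ((castAlg k (inv_inv α)).toLinearMap ∘ₗ S α⁻¹) LinearMap.id)
        (Δ α⁻¹ α x))
      = ε (castAlg k (inv_mul_cancel α) x) • 1
  antipode_right : ∀ (α : G) (x : H (α * α⁻¹)),
    (LinearMap.mul' k (H α))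
      ((TensorProduct.map LinearMap.id ((castAlg k (inv_inv α)).toLinearMap ∘ₗ S α⁻¹))
        (Δ α α⁻¹ x))
      = ε (castAlg k (mul_inv_cancel α) x) • 1

namespace HopfGCoalgebra

variable {k G : Type} [Field k] [Group G] {H : G → Type}
  [∀ γ : G, Ring (H γ)] [∀ γ : G, Algebra k (H γ)]

/-- A family of linear forms is a right `G`-integral. -/
def IsRightIntegral (D : HopfGCoalgebra k G H) (μ : ∀ γ : G, H γ →ₗ[k] k) : Prop :=
  ∀ (α β : G) (x : H (α * β)),
    (TensorProduct.lid k (H β)) ((TensorProduct.map (μ α) LinearMap.id) (D.Δ α β x))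
      = μ (α * β) x • 1

/-- A family of linear forms is a left `G`-integral. -/
def IsLeftIntegral (D : HopfGCoalgebra k G H) (μ : ∀ γ : G, H γ →ₗ[k] k) : Prop :=
  ∀ (α β : G) (x : H (α * β)),
    (TensorProduct.rid k (H α)) ((TensorProduct.map LinearMap.id (μ β)) (D.Δ α β x))
      = μ (α * β) x • 1

/-- A family of invertible elements is a pivot. -/
structure IsPivot (D : HopfGCoalgebra k G H) (g : ∀ γ : G, (H γ)ˣ) : Prop where
  delta : ∀ α β : G, D.Δ α β (g (α * β) : H (α * β)) = (g α : H α) ⊗ₜ[k] (g β : H β)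
  counit : D.ε (g 1 : H 1) = 1
  antipode : ∀ (α : G) (x : H α),
    castAlg k (inv_inv α) (D.S α⁻¹ (D.S α x)) = (g α : H α) * x * ((g α)⁻¹ : (H α)ˣ)

/-- `H` is unimodular if `H₁` admits a nonzero two-sided cointegral. -/
def IsUnimodular (D : HopfGCoalgebra k G H) : Prop :=
  ∃ Λ : H 1, Λ ≠ 0 ∧ ∀ h : H 1, h * Λ = D.ε h • Λ ∧ Λ * h = D.ε h • Λ

/-- A `G`-comodulus for a right `G`-integral `μ`. -/
structure IsComodulus (D : HopfGCoalgebra k G H) (μ : ∀ γ : G, H γ →ₗ[k] k)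
    (a : ∀ γ : G, (H γ)ˣ) : Prop where
  delta : ∀ α β : G, D.Δ α β (a (α * β) : H (α * β)) = (a α : H α) ⊗ₜ[k] (a β : H β)
  counit : D.ε (a 1 : H 1) = 1
  rel : ∀ (α β : G) (x : H (α * β)),
    (TensorProduct.rid k (H α)) ((TensorProduct.map LinearMap.id (μ β)) (D.Δ α β x))
      = μ (α * β) x • (a α : H α)

end HopfGCoalgebra

namespace HopfGCoalgebra

variable {k G : Type} [Field k] [Group G] {H : G → Type}
  [∀ γ : G, Ring (H γ)] [∀ γ : G, Algebra k (H γ)]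

/-- The trivial `H₁`-module structure on a `k`-vector space, `h • w = ε(h) • w`. -/
def trivialModule (D : HopfGCoalgebra k G H) (W : Type) [AddCommGroup W] [Module k W] :
    Module (H (1 : G)) W :=
  Module.compHom W D.ε.toRingHom

theorem trivialModuleTower (D : HopfGCoalgebra k G H) (W : Type) [AddCommGroup W]
    [Module k W] :
    letI := D.trivialModule W
    IsScalarTower k (H (1 : G)) W := by
  letI := D.trivialModule W
  refine ⟨fun c h w => ?_⟩
  show D.ε (c • h) • w = c • (D.ε h • w)
  rw [map_smul, smul_eq_mul, mul_smul]

/-- The representation of `H_γ` (for `γ = αβ`) on `P ⊗ W` obtained from an `H_α`-module `P`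
and an `H_β`-module `W` through the coproduct `Δ_{α,β}`. -/
noncomputable def deltaRep (D : HopfGCoalgebra k G H) (α β γ : G) (hγ : γ = α * β)
    (P W : Type) [AddCommGroup P] [Module k P] [Module (H α) P] [IsScalarTower k (H α) P]
    [AddCommGroup W] [Module k W] [Module (H β) W] [IsScalarTower k (H β) W] :
    H γ →ₐ[k] Module.End k (P ⊗[k] W) :=
  (Module.endTensorEndAlgHom.comp
      (Algebra.TensorProduct.map (Algebra.lsmul k k P) (Algebra.lsmul k k W))).comp
    ((D.Δ α β).comp (castAlg k hγ).toAlgHom)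

/-- The `H_γ`-module structure on `P ⊗ W` (for `γ = αβ`) induced by `Δ_{α,β}`. -/
noncomputable def tensorModule (D : HopfGCoalgebra k G H) (α β γ : G) (hγ : γ = α * β)
    (P W : Type) [AddCommGroup P] [Module k P] [Module (H α) P] [IsScalarTower k (H α) P]
    [AddCommGroup W] [Module k W] [Module (H β) W] [IsScalarTower k (H β) W] :
    Module (H γ) (P ⊗[k] W) :=
  Module.compHom (P ⊗[k] W) (D.deltaRep α β γ hγ P W).toRingHom

theorem tensorModuleTower (D : HopfGCoalgebra k G H) (α β γ : G) (hγ : γ = α * β)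
    (P W : Type) [AddCommGroup P] [Module k P] [Module (H α) P] [IsScalarTower k (H α) P]
    [AddCommGroup W] [Module k W] [Module (H β) W] [IsScalarTower k (H β) W] :
    letI := D.tensorModule α β γ hγ P W
    IsScalarTower k (H γ) (P ⊗[k] W) := by
  letI := D.tensorModule α β γ hγ P W
  refine ⟨fun c h x => ?_⟩
  show (D.deltaRep α β γ hγ P W (c • h)) x = c • (D.deltaRep α β γ hγ P W h) x
  rw [map_smul]
  rfl

/-- The right partial trace `tr^r_W(f)` of a `k`-linear map `f : P ⊗ W → P ⊗ W`, computed
with the duality morphisms of the pivotal structure (`gβ` is the pivot in degree `β`). -/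
noncomputable def trR (β : G) (P W : Type)
    [AddCommGroup P] [Module k P]
    [AddCommGroup W] [Module k W] [Module (H β) W] [IsScalarTower k (H β) W]
    [FiniteDimensional k W]
    (gβ : H β) (f : (P ⊗[k] W) →ₗ[k] (P ⊗[k] W)) : P →ₗ[k] P :=
  (TensorProduct.rid k P).toLinearMap
    ∘ₗ TensorProduct.map LinearMap.id
        (contractRight k W ∘ₗ TensorProduct.map (Algebra.lsmul k k W gβ) LinearMap.id)
    ∘ₗ (TensorProduct.assoc k P W (Module.Dual k W)).toLinearMap
    ∘ₗ TensorProduct.map f LinearMap.id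
    ∘ₗ (TensorProduct.assoc k P W (Module.Dual k W)).symm.toLinearMap
    ∘ₗ TensorProduct.map LinearMap.id (coevaluation k W)
    ∘ₗ (TensorProduct.rid k P).symm.toLinearMap

/-- The left partial trace `tr^l_W(f)` of a `k`-linear map `f : W ⊗ P → W ⊗ P`, computed
with the duality morphisms of the pivotal structure (`gβinv` is the inverse of the pivot in
degree `β`). -/
noncomputable def trL (β : G) (W P : Type)
    [AddCommGroup P] [Module k P]
    [AddCommGroup W] [Module k W] [Module (H β) W] [IsScalarTower k (H β) W]
    [FiniteDimensional k W]
    (gβinv : H β) (f : (W ⊗[k] P) →ₗ[k] (W ⊗[k] P)) : P →ₗ[k] P :=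
  (TensorProduct.lid k P).toLinearMap
    ∘ₗ TensorProduct.map (contractLeft k W) LinearMap.id
    ∘ₗ (TensorProduct.assoc k (Module.Dual k W) W P).symm.toLinearMap
    ∘ₗ TensorProduct.map LinearMap.id f
    ∘ₗ (TensorProduct.assoc k (Module.Dual k W) W P).toLinearMap
    ∘ₗ TensorProduct.map
        ((TensorProduct.comm k W (Module.Dual k W)).toLinearMap
          ∘ₗ TensorProduct.map (Algebra.lsmul k k W gβinv) LinearMap.id
          ∘ₗ coevaluation k W)
        LinearMap.id
    ∘ₗ (TensorProduct.lid k P).symm.toLinearMap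

end HopfGCoalgebra

/-- The data of a `k`-linear form on `End_{H_γ}(P)` for every `γ ∈ G` and every
finite-dimensional projective `H_γ`-module `P`. -/
abbrev TraceData (k G : Type) [Field k] [Group G] (H : G → Type)
    [∀ γ : G, Ring (H γ)] [∀ γ : G, Algebra k (H γ)] : Type 1 :=
  ∀ (γ : G) (P : Type) [AddCommGroup P] [Module k P] [Module (H γ) P]
    [IsScalarTower k (H γ) P] [FiniteDimensional k P] [Module.Projective (H γ) P],
    (P →ₗ[H γ] P) →ₗ[k] k

namespace HopfGCoalgebra

variable {k G : Type} [Field k] [Group G] {H : G → Type}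
  [∀ γ : G, Ring (H γ)] [∀ γ : G, Algebra k (H γ)]

/-- A cyclic trace on `H`-pmod. -/
def IsCyclicTrace (t : TraceData k G H) : Prop :=
  ∀ (γ : G) (P Q : Type)
    [AddCommGroup P] [Module k P] [Module (H γ) P] [IsScalarTower k (H γ) P]
    [FiniteDimensional k P] [Module.Projective (H γ) P]
    [AddCommGroup Q] [Module k Q] [Module (H γ) Q] [IsScalarTower k (H γ) Q]
    [FiniteDimensional k Q] [Module.Projective (H γ) Q]
    (f : P →ₗ[H γ] Q) (g : Q →ₗ[H γ] P),
    t γ P (g.comp f) = t γ Q (f.comp g)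

/-- The right partial trace property of a trace `t`:
`t_{P⊗W}(f) = t_P(tr^r_W(f))` for every projective `H_α`-module `P`, finite-dimensional
`H_β`-module `W`, and `H_{αβ}`-linear endomorphism `f` of `P ⊗ W`. -/
def HasRightPartialTraceProperty (D : HopfGCoalgebra k G H) (g : ∀ γ : G, (H γ)ˣ)
    (t : TraceData k G H) : Prop :=
  ∀ (α β : G) (P W : Type)
    [AddCommGroup P] [Module k P] [Module (H α) P] [IsScalarTower k (H α) P]
    [FiniteDimensional k P] [Module.Projective (H α) P]
    [AddCommGroup W] [Module k W] [Module (H β) W] [IsScalarTower k (H β) W]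
    [FiniteDimensional k W],
    letI := D.tensorModule α β (α * β) rfl P W
    haveI := D.tensorModuleTower α β (α * β) rfl P W
    ∀ [Module.Projective (H (α * β)) (P ⊗[k] W)]
      (f : (P ⊗[k] W) →ₗ[H (α * β)] (P ⊗[k] W)) (f' : P →ₗ[H α] P),
      f'.restrictScalars k = trR β P W (g β : H β) (f.restrictScalars k) →
      t (α * β) (P ⊗[k] W) f = t α P f'

/-- The left partial trace property of a trace `t`:
`t_{W⊗P}(f) = t_P(tr^l_W(f))` for every projective `H_α`-module `P`, finite-dimensional
`H_β`-module `W`, and `H_{βα}`-linear endomorphism `f` of `W ⊗ P`. -/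
def HasLeftPartialTraceProperty (D : HopfGCoalgebra k G H) (g : ∀ γ : G, (H γ)ˣ)
    (t : TraceData k G H) : Prop :=
  ∀ (α β : G) (P W : Type)
    [AddCommGroup P] [Module k P] [Module (H α) P] [IsScalarTower k (H α) P]
    [FiniteDimensional k P] [Module.Projective (H α) P]
    [AddCommGroup W] [Module k W] [Module (H β) W] [IsScalarTower k (H β) W]
    [FiniteDimensional k W],
    letI := D.tensorModule β α (β * α) rfl W P
    haveI := D.tensorModuleTower β α (β * α) rfl W P
    ∀ [Module.Projective (H (β * α)) (W ⊗[k] P)]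
      (f : (W ⊗[k] P) →ₗ[H (β * α)] (W ⊗[k] P)) (f' : P →ₗ[H α] P),
      f'.restrictScalars k = trL β W P (((g β)⁻¹ : (H β)ˣ) : H β) (f.restrictScalars k) →
      t (β * α) (W ⊗[k] P) f = t α P f'

/-- A right modified trace on `H`-pmod. -/
def IsRightModifiedTrace (D : HopfGCoalgebra k G H) (g : ∀ γ : G, (H γ)ˣ)
    (t : TraceData k G H) : Prop :=
  IsCyclicTrace t ∧ D.HasRightPartialTraceProperty g t

/-- A left modified trace on `H`-pmod. -/
def IsLeftModifiedTrace (D : HopfGCoalgebra k G H) (g : ∀ γ : G, (H γ)ˣ)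
    (t : TraceData k G H) : Prop :=
  IsCyclicTrace t ∧ D.HasLeftPartialTraceProperty g t

end HopfGCoalgebra

/-! ### Sweedler calculus and the antipode -/

namespace HopfGCoalgebra

section Sweedler

variable {k G : Type} [Field k] [Group G] {H : G → Type}
  [∀ γ : G, Ring (H γ)] [∀ γ : G, Algebra k (H γ)]

omit [Group G] in
theorem castAlg_self {γ : G} (h : γ = γ) (x : H γ) : castAlg k h x = x := rfl

omit [Group G] in
theorem castAlg_castAlg {γ γ' γ'' : G} (h : γ = γ') (h' : γ' = γ'') (x : H γ) :
    castAlg k h' (castAlg k h x) = castAlg k (h.trans h') x := by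
  subst h; subst h'; rfl

/-- The coproduct `H_γ → H_α ⊗ H_β` for any index `γ` equal to `αβ`, which keeps transports
between equal indices out of the computations. -/
noncomputable def comul (D : HopfGCoalgebra k G H) {α β γ : G} (h : γ = α * β) :
    H γ →ₐ[k] H α ⊗[k] H β :=
  (D.Δ α β).comp (castAlg k h).toAlgHom

/-- The antipode `H_α → H_β` for any index `β` equal to `α⁻¹`. -/
noncomputable def antip (D : HopfGCoalgebra k G H) {α β : G} (h : β = α⁻¹) :
    H α →ₗ[k] H β :=
  (castAlg k h.symm).toLinearMap ∘ₗ D.S α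

theorem comul_assoc (D : HopfGCoalgebra k G H) {α β γ δ σ τ : G} (h₁ : δ = α * β)
    (h₂ : σ = δ * γ) (h₃ : τ = β * γ) (h₄ : σ = α * τ) (x : H σ) :
    TensorProduct.assoc k _ _ _
        (TensorProduct.map (D.comul h₁).toLinearMap LinearMap.id (D.comul h₂ x))
      = TensorProduct.map LinearMap.id (D.comul h₃).toLinearMap (D.comul h₄ x) := by
  subst h₁; subst h₃; subst h₂
  exact (LinearEquiv.eq_symm_apply _).1 (D.coassoc α β γ x)

theorem comul_counit_right (D : HopfGCoalgebra k G H) {α : G} (h : α = α * 1) (x : H α) :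
    TensorProduct.map LinearMap.id D.ε.toLinearMap (D.comul h x) = x ⊗ₜ[k] (1 : k) := by
  have := D.counit_right α (castAlg k h x)
  rw [castAlg_castAlg, castAlg_self] at this
  have h2 := congrArg (TensorProduct.rid k (H α)).symm this
  rw [LinearEquiv.symm_apply_apply, TensorProduct.rid_symm_apply] at h2
  exact h2

theorem comul_counit_left (D : HopfGCoalgebra k G H) {α : G} (h : α = 1 * α) (x : H α) :
    TensorProduct.map D.ε.toLinearMap LinearMap.id (D.comul h x) = (1 : k) ⊗ₜ[k] x := by
  have := D.counit_left α (castAlg k h x)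
  rw [castAlg_castAlg, castAlg_self] at this
  have h2 := congrArg (TensorProduct.lid k (H α)).symm this
  rw [LinearEquiv.symm_apply_apply, TensorProduct.lid_symm_apply] at h2
  exact h2

theorem antip_left (D : HopfGCoalgebra k G H) {α β : G} (h : (1 : G) = β * α) (h' : α = β⁻¹)
    (x : H 1) :
    LinearMap.mul' k (H α) (TensorProduct.map (D.antip h') LinearMap.id (D.comul h x))
      = D.ε x • 1 := by
  obtain rfl : β = α⁻¹ := by subst h'; simp
  have := D.antipode_left α (castAlg k h x)
  rw [castAlg_castAlg, castAlg_self] at this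
  exact this

theorem antip_right (D : HopfGCoalgebra k G H) {α β : G} (h : (1 : G) = α * β) (h' : α = β⁻¹)
    (x : H 1) :
    LinearMap.mul' k (H α) (TensorProduct.map LinearMap.id (D.antip h') (D.comul h x))
      = D.ε x • 1 := by
  obtain rfl : β = α⁻¹ := by subst h'; simp
  have := D.antipode_right α (castAlg k h x)
  rw [castAlg_castAlg, castAlg_self] at this
  exact this

/-- In Sweedler notation: if `m` contracts `y₁ ⊗ y₂` to `ε(y)1` for `y ∈ H₁`, then
`x₁ ⊗ m(x₂ ⊗ x₃) = x ⊗ 1`. The various antipode cancellations are all instances of this. -/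
theorem comul_contract (D : HopfGCoalgebra k G H) {α β β' γ δ : G} (h₁ : γ = α * β)
    (h₂ : α = γ * β') (h₃ : (1 : G) = β * β') (m : H β ⊗[k] H β' →ₗ[k] H δ)
    (hm : ∀ y, m (D.comul h₃ y) = D.ε y • 1) (x : H α) :
    TensorProduct.map LinearMap.id m (TensorProduct.assoc k _ _ _
        (TensorProduct.map (D.comul h₁).toLinearMap LinearMap.id (D.comul h₂ x)))
      = x ⊗ₜ[k] 1 := by
  rw [D.comul_assoc h₁ h₂ h₃ (mul_one α).symm, ← LinearMap.comp_apply, ← TensorProduct.map_comp]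
  have e : m ∘ₗ (D.comul h₃).toLinearMap
      = (LinearMap.toSpanSingleton k (H δ) 1) ∘ₗ D.ε.toLinearMap := by
    ext y; simpa using hm y
  rw [e, TensorProduct.map_comp, LinearMap.comp_apply, comul_counit_right]
  simp

theorem antip_one (D : HopfGCoalgebra k G H) {α β : G} (h : β = α⁻¹) :
    D.antip h (1 : H α) = 1 := by
  have := D.antip_left (α := β) (β := α) (by subst h; simp) h 1
  simpa [Algebra.TensorProduct.one_def] using this

/-- `S(x₁ y) x₂ = ε(x) S(y)`. -/
theorem antip_mul_aux (D : HopfGCoalgebra k G H) {α β : G} (h : β = α⁻¹)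
    (h₁ : (1 : G) = α * β) (x : H 1) (y : H α) :
    LinearMap.mul' k (H β) (TensorProduct.map (D.antip h ∘ₗ LinearMap.mulRight k y) LinearMap.id
      (D.comul h₁ x)) = D.ε x • D.antip h y := by
  have h₃ : (1 : G) = β * α := by subst h; simp
  have key := D.comul_contract h₁ (one_mul α).symm h₃
    (LinearMap.mul' k (H β) ∘ₗ TensorProduct.map LinearMap.id (D.antip h))
    (fun y => by simpa using D.antip_right h₃ h y) y
  -- the form `a ⊗ z ↦ S(x₁ a) x₂ z`
  let F (u : H α ⊗[k] H β) : H α ⊗[k] H β →ₗ[k] H β :=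
    LinearMap.mul' k (H β) ∘ₗ TensorProduct.map (D.antip h) LinearMap.id ∘ₗ
      LinearMap.mulLeft k u
  have hF : ∀ (u : H α ⊗[k] H β) (a : H α) (z : H β), F u (a ⊗ₜ z)
      = LinearMap.mul' k (H β) (TensorProduct.map (D.antip h ∘ₗ LinearMap.mulRight k a)
        LinearMap.id u) * z := by
    intro u a z
    induction u using TensorProduct.induction_on with
    | zero => simp [F]
    | tmul p q => simp [F, mul_assoc]
    | add p q hp hq =>
      have : F (p + q) = F p + F q := by ext; simp [F, add_mul]
      rw [this, LinearMap.add_apply, hp, hq, map_add, map_add, add_mul]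
  have hF' : ∀ (u v : H α ⊗[k] H β) (z : H α), F u (TensorProduct.map LinearMap.id
      (LinearMap.mul' k (H β) ∘ₗ TensorProduct.map LinearMap.id (D.antip h))
      (TensorProduct.assoc k _ _ _ (v ⊗ₜ z))) = F u v * D.antip h z := by
    intro u v z
    induction v using TensorProduct.induction_on with
    | zero => simp
    | tmul p q => simp [hF, mul_assoc]
    | add p q hp hq => rw [TensorProduct.add_tmul, map_add, map_add, map_add, hp, hq, map_add,
        add_mul]
  have h5 : ∀ w : H 1, F (D.comul h₁ x) (D.comul h₁ w) = (D.ε x * D.ε w) • 1 := by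
    intro w
    have := D.antip_left h₁ h (x * w)
    rw [map_mul D.ε, map_mul (D.comul h₁)] at this
    exact this
  have h6 : ∀ w : H 1 ⊗[k] H α, F (D.comul h₁ x) (TensorProduct.map LinearMap.id
      (LinearMap.mul' k (H β) ∘ₗ TensorProduct.map LinearMap.id (D.antip h))
      (TensorProduct.assoc k _ _ _ (TensorProduct.map (D.comul h₁).toLinearMap LinearMap.id w)))
      = D.ε x • D.antip h (TensorProduct.lid k _
        (TensorProduct.map D.ε.toLinearMap LinearMap.id w)) := by
    intro w
    induction w using TensorProduct.induction_on with
    | zero => simp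
    | tmul p q =>
      rw [TensorProduct.map_tmul, LinearMap.id_apply, hF']
      erw [h5]
      simp [mul_smul]
    | add p q hp hq => simp only [map_add, hp, hq, smul_add]
  have h7 := h6 (D.comul (one_mul α).symm y)
  rw [key, hF, mul_one, comul_counit_left] at h7
  simpa using h7

theorem antip_mul (D : HopfGCoalgebra k G H) {α β : G} (h : β = α⁻¹) (x y : H α) :
    D.antip h (x * y) = D.antip h y * D.antip h x := by
  have h₁ : (1 : G) = α * β := by subst h; simp
  have h₃ : (1 : G) = β * α := by subst h; simp
  have key := D.comul_contract h₁ (one_mul α).symm h₃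
    (LinearMap.mul' k (H β) ∘ₗ TensorProduct.map LinearMap.id (D.antip h))
    (fun y => by simpa using D.antip_right h₃ h y) x
  let F : H α ⊗[k] H β →ₗ[k] H β :=
    LinearMap.mul' k (H β) ∘ₗ TensorProduct.map (D.antip h ∘ₗ LinearMap.mulRight k y)
      LinearMap.id
  have hF' : ∀ (v : H α ⊗[k] H β) (z : H α), F (TensorProduct.map LinearMap.id
      (LinearMap.mul' k (H β) ∘ₗ TensorProduct.map LinearMap.id (D.antip h))
      (TensorProduct.assoc k _ _ _ (v ⊗ₜ z))) = F v * D.antip h z := by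
    intro v z
    induction v using TensorProduct.induction_on with
    | zero => simp
    | tmul p q => simp [F, mul_assoc]
    | add p q hp hq => rw [TensorProduct.add_tmul, map_add, map_add, map_add, hp, hq, map_add,
        add_mul]
  have h6 : ∀ w : H 1 ⊗[k] H α, F (TensorProduct.map LinearMap.id
      (LinearMap.mul' k (H β) ∘ₗ TensorProduct.map LinearMap.id (D.antip h))
      (TensorProduct.assoc k _ _ _ (TensorProduct.map (D.comul h₁).toLinearMap LinearMap.id w)))
      = D.antip h y * D.antip h (TensorProduct.lid k _
        (TensorProduct.map D.ε.toLinearMap LinearMap.id w)) := by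
    intro w
    induction w using TensorProduct.induction_on with
    | zero => simp
    | tmul p q =>
      have := D.antip_mul_aux h h₁ p y
      rw [TensorProduct.map_tmul, LinearMap.id_apply, hF']
      erw [this]
      simp
    | add p q hp hq => simp only [map_add, hp, hq, mul_add]
  have h7 := h6 (D.comul (one_mul α).symm x)
  rw [key, comul_counit_left] at h7
  simpa [F] using h7

/-- The map `x ↦ g⁻¹ S(x) g`, which is the inverse of the antipode of a pivotal structure. -/
noncomputable def antipInv (D : HopfGCoalgebra k G H) (g : ∀ γ : G, (H γ)ˣ) {α β : G}
    (h : β = α⁻¹) : H α →ₗ[k] H β :=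
  LinearMap.mulRight k (g β : H β) ∘ₗ LinearMap.mulLeft k (((g β)⁻¹ : (H β)ˣ) : H β) ∘ₗ D.antip h

theorem antipInv_apply (D : HopfGCoalgebra k G H) (g : ∀ γ : G, (H γ)ˣ) {α β : G}
    (h : β = α⁻¹) (x : H α) :
    D.antipInv g h x = (((g β)⁻¹ : (H β)ˣ) : H β) * D.antip h x * (g β : H β) := rfl

theorem antip_antip (D : HopfGCoalgebra k G H) {g : ∀ γ : G, (H γ)ˣ} (hg : D.IsPivot g)
    {α β : G} (h : β = α⁻¹) (h' : α = β⁻¹) (x : H α) :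
    D.antip h' (D.antip h x) = (g α : H α) * x * (((g α)⁻¹ : (H α)ˣ) : H α) := by
  subst h
  exact hg.antipode α x

theorem antipInv_antip (D : HopfGCoalgebra k G H) {g : ∀ γ : G, (H γ)ˣ} (hg : D.IsPivot g)
    {α β : G} (h : β = α⁻¹) (h' : α = β⁻¹) (x : H α) :
    D.antipInv g h' (D.antip h x) = x := by
  rw [antipInv_apply, D.antip_antip hg]
  simp [mul_assoc]

theorem antip_antipInv (D : HopfGCoalgebra k G H) {g : ∀ γ : G, (H γ)ˣ} (hg : D.IsPivot g)
    {α β : G} (h : β = α⁻¹) (h' : α = β⁻¹) (x : H α) :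
    D.antip h' (D.antipInv g h x) = x := by
  -- `x` lies in the image of the antipode because the square of the antipode is onto
  obtain ⟨y, rfl⟩ : ∃ y, D.antip h' y = x :=
    ⟨D.antip h ((((g α)⁻¹ : (H α)ˣ) : H α) * x * (g α : H α)), by
      rw [D.antip_antip hg]; simp [mul_assoc]⟩
  rw [D.antipInv_antip hg]

theorem antip_injective (D : HopfGCoalgebra k G H) {g : ∀ γ : G, (H γ)ˣ} (hg : D.IsPivot g)
    {α β : G} (h : β = α⁻¹) : Function.Injective (D.antip h) := by
  have h' : α = β⁻¹ := by subst h; simp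
  exact Function.LeftInverse.injective (D.antipInv_antip hg h h')

/-- `S⁻¹(x₂) x₁ = ε(x)`. -/
theorem antipInv_left (D : HopfGCoalgebra k G H) {g : ∀ γ : G, (H γ)ˣ} (hg : D.IsPivot g)
    {α β : G} (h : (1 : G) = α * β) (h' : α = β⁻¹) (x : H 1) :
    LinearMap.mul' k (H α) (TensorProduct.map (D.antipInv g h') LinearMap.id
      (TensorProduct.comm k _ _ (D.comul h x))) = D.ε x • 1 := by
  have h'' : β = α⁻¹ := by subst h'; simp
  apply D.antip_injective hg h''
  have e := D.antip_left h h'' x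
  rw [map_smul, antip_one, ← e]
  generalize D.comul h x = u
  induction u using TensorProduct.induction_on with
  | zero => simp
  | tmul p q => simp [antip_mul, D.antip_antipInv hg]
  | add p q hp hq => simp only [map_add, hp, hq]

/-- `x₂ S⁻¹(x₁) = ε(x)`. -/
theorem antipInv_right (D : HopfGCoalgebra k G H) {g : ∀ γ : G, (H γ)ˣ} (hg : D.IsPivot g)
    {α β : G} (h : (1 : G) = β * α) (h' : α = β⁻¹) (x : H 1) :
    LinearMap.mul' k (H α) (TensorProduct.map LinearMap.id (D.antipInv g h')
      (TensorProduct.comm k _ _ (D.comul h x))) = D.ε x • 1 := by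
  have h'' : β = α⁻¹ := by subst h'; simp
  apply D.antip_injective hg h''
  have e := D.antip_right h h'' x
  rw [map_smul, antip_one, ← e]
  generalize D.comul h x = u
  induction u using TensorProduct.induction_on with
  | zero => simp
  | tmul p q => simp [antip_mul, D.antip_antipInv hg]
  | add p q hp hq => simp only [map_add, hp, hq]

theorem comul_pivot (D : HopfGCoalgebra k G H) {g : ∀ γ : G, (H γ)ˣ} (hg : D.IsPivot g)
    {α β γ : G} (h : γ = α * β) :
    D.comul h (g γ : H γ) = (g α : H α) ⊗ₜ[k] (g β : H β) := by
  subst h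
  exact hg.delta α β

end Sweedler

end HopfGCoalgebra

/-! ### Partial traces, tensor products of modules and projectivity -/

namespace HopfGCoalgebra

section Trace

variable {k : Type} [Field k]

/-- Linear maps between tensor products of finite-dimensional spaces are sums of maps `A ⊗ B`. -/
theorem hom_tensor_induction {P W P' W' : Type} [AddCommGroup P] [Module k P]
    [FiniteDimensional k P] [AddCommGroup W] [Module k W] [FiniteDimensional k W]
    [AddCommGroup P'] [Module k P'] [FiniteDimensional k P'] [AddCommGroup W'] [Module k W']
    [FiniteDimensional k W'] {C : (P ⊗[k] W →ₗ[k] P' ⊗[k] W') → Prop}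
    (hmap : ∀ (A : P →ₗ[k] P') (B : W →ₗ[k] W'), C (TensorProduct.map A B))
    (hadd : ∀ X Y, C X → C Y → C (X + Y)) (F : P ⊗[k] W →ₗ[k] P' ⊗[k] W') : C F := by
  obtain ⟨u, rfl⟩ := (homTensorHomEquiv k P W P' W').surjective F
  induction u using TensorProduct.induction_on with
  | zero => simpa using hmap 0 0
  | tmul A B => simpa [homTensorHomEquiv_apply] using hmap A B
  | add X Y hX hY => rw [map_add]; exact hadd _ _ hX hY

variable {G : Type} {H : G → Type} [∀ γ : G, Ring (H γ)] [∀ γ : G, Algebra k (H γ)]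

theorem trR_add (β : G) (P W : Type) [AddCommGroup P] [Module k P]
    [AddCommGroup W] [Module k W] [Module (H β) W] [IsScalarTower k (H β) W]
    [FiniteDimensional k W] (x : H β) (F F' : (P ⊗[k] W) →ₗ[k] (P ⊗[k] W)) :
    trR β P W x (F + F') = trR β P W x F + trR β P W x F' := by
  simp only [trR, TensorProduct.map_add_left, LinearMap.add_comp, LinearMap.comp_add]

theorem trL_add (β : G) (W P : Type) [AddCommGroup P] [Module k P]
    [AddCommGroup W] [Module k W] [Module (H β) W] [IsScalarTower k (H β) W]
    [FiniteDimensional k W] (x : H β) (F F' : (W ⊗[k] P) →ₗ[k] (W ⊗[k] P)) :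
    trL β W P x (F + F') = trL β W P x F + trL β W P x F' := by
  simp only [trL, TensorProduct.map_add_right, LinearMap.add_comp, LinearMap.comp_add]

theorem trace_eq_sum_ofVectorSpace (W : Type) [AddCommGroup W] [Module k W]
    [FiniteDimensional k W] (B : W →ₗ[k] W) :
    LinearMap.trace k W B = ∑ i, (Module.Basis.ofVectorSpace k W).coord i
      (B (Module.Basis.ofVectorSpace k W i)) := by
  classical
  rw [LinearMap.trace_eq_matrix_trace k (Module.Basis.ofVectorSpace k W), Matrix.trace]
  simp [LinearMap.toMatrix_apply]

/-- On pure tensors the right partial trace is `tr^r(A ⊗ B) = Tr(gB) A`. -/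
theorem trR_map (β : G) (P W : Type) [AddCommGroup P] [Module k P]
    [AddCommGroup W] [Module k W] [Module (H β) W] [IsScalarTower k (H β) W]
    [FiniteDimensional k W] (x : H β) (A : P →ₗ[k] P) (B : W →ₗ[k] W) :
    trR β P W x (TensorProduct.map A B)
      = LinearMap.trace k W (Algebra.lsmul k k W x ∘ₗ B) • A := by
  ext p
  rw [trace_eq_sum_ofVectorSpace]
  simp [trR, coevaluation_apply_one, TensorProduct.tmul_sum, Finset.sum_smul]

/-- On pure tensors the left partial trace is `tr^l(B ⊗ A) = Tr(B g⁻¹) A`. -/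
theorem trL_map (β : G) (W P : Type) [AddCommGroup P] [Module k P]
    [AddCommGroup W] [Module k W] [Module (H β) W] [IsScalarTower k (H β) W]
    [FiniteDimensional k W] (x : H β) (B : W →ₗ[k] W) (A : P →ₗ[k] P) :
    trL β W P x (TensorProduct.map B A)
      = LinearMap.trace k W (B ∘ₗ Algebra.lsmul k k W x) • A := by
  ext p
  rw [trace_eq_sum_ofVectorSpace]
  simp [trL, coevaluation_apply_one, TensorProduct.sum_tmul, Finset.sum_smul]

/-- Naturality in the first factor and cyclicity in the second factor. -/
theorem trR_natural (β : G) (P W P' W' : Type) [AddCommGroup P] [Module k P]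
    [FiniteDimensional k P] [AddCommGroup P'] [Module k P']
    [AddCommGroup W] [Module k W] [Module (H β) W] [IsScalarTower k (H β) W]
    [FiniteDimensional k W]
    [AddCommGroup W'] [Module k W'] [Module (H β) W'] [IsScalarTower k (H β) W']
    [FiniteDimensional k W'] (x : H β) (F : (P ⊗[k] W) →ₗ[k] (P ⊗[k] W))
    (a : P →ₗ[k] P') (b : P' →ₗ[k] P) (c : W →ₗ[H β] W') (d : W' →ₗ[k] W) :
    trR β P' W' x (TensorProduct.map a (c.restrictScalars k) ∘ₗ F ∘ₗ TensorProduct.map b d)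
      = a ∘ₗ trR β P W x (F ∘ₗ TensorProduct.map LinearMap.id (d ∘ₗ c.restrictScalars k)) ∘ₗ b := by
  induction F using hom_tensor_induction with
  | hmap A B =>
    have e : Algebra.lsmul k k W' x ∘ₗ (c.restrictScalars k ∘ₗ (B ∘ₗ d))
        = c.restrictScalars k ∘ₗ (Algebra.lsmul k k W x ∘ₗ B ∘ₗ d) := by
      ext; simp
    rw [← TensorProduct.map_comp, ← TensorProduct.map_comp, ← TensorProduct.map_comp, trR_map,
      trR_map, e, LinearMap.trace_comp_comm', LinearMap.smul_comp, LinearMap.comp_smul]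
    rfl
  | hadd X Y hX hY =>
    simp only [LinearMap.add_comp, LinearMap.comp_add, trR_add, hX, hY]

theorem trR_comp_right (β : G) (P W : Type) [AddCommGroup P] [Module k P]
    [FiniteDimensional k P]
    [AddCommGroup W] [Module k W] [Module (H β) W] [IsScalarTower k (H β) W]
    [FiniteDimensional k W] (x : H β) (F : (P ⊗[k] W) →ₗ[k] (P ⊗[k] W)) (b : P →ₗ[k] P) :
    trR β P W x (F ∘ₗ TensorProduct.map b LinearMap.id) = trR β P W x F ∘ₗ b := by
  have := trR_natural β P W P W x F LinearMap.id b LinearMap.id LinearMap.id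
  have e : (LinearMap.id : W →ₗ[H β] W).restrictScalars k = LinearMap.id := rfl
  simpa [e] using this

theorem trR_comp_left (β : G) (P W : Type) [AddCommGroup P] [Module k P]
    [FiniteDimensional k P]
    [AddCommGroup W] [Module k W] [Module (H β) W] [IsScalarTower k (H β) W]
    [FiniteDimensional k W] (x : H β) (F : (P ⊗[k] W) →ₗ[k] (P ⊗[k] W)) (b : P →ₗ[k] P) :
    trR β P W x (TensorProduct.map b LinearMap.id ∘ₗ F) = b ∘ₗ trR β P W x F := by
  have := trR_natural β P W P W x F b LinearMap.id LinearMap.id LinearMap.id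
  have e : (LinearMap.id : W →ₗ[H β] W).restrictScalars k = LinearMap.id := rfl
  simpa [e] using this

/-- Cyclicity of the partial trace for the action of an algebra element on the second factor,
which is twisted by the pivot. -/
theorem trR_twist (β : G) (P W : Type) [AddCommGroup P] [Module k P]
    [FiniteDimensional k P]
    [AddCommGroup W] [Module k W] [Module (H β) W] [IsScalarTower k (H β) W]
    [FiniteDimensional k W] (x : (H β)ˣ) (F : (P ⊗[k] W) →ₗ[k] (P ⊗[k] W)) (y : H β) :
    trR β P W (x : H β) (F ∘ₗ TensorProduct.map LinearMap.id (Algebra.lsmul k k W y))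
      = trR β P W (x : H β) (TensorProduct.map LinearMap.id
        (Algebra.lsmul k k W (((x⁻¹ : (H β)ˣ) : H β) * y * x)) ∘ₗ F) := by
  induction F using hom_tensor_induction with
  | hmap A B =>
    have e : Algebra.lsmul k k W (x : H β) ∘ₗ
        (Algebra.lsmul k k W (((x⁻¹ : (H β)ˣ) : H β) * y * x) ∘ₗ B)
        = Algebra.lsmul k k W y ∘ₗ (Algebra.lsmul k k W (x : H β) ∘ₗ B) := by
      ext; simp [← mul_smul, ← mul_assoc]
    rw [← TensorProduct.map_comp, ← TensorProduct.map_comp, trR_map, trR_map, e,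
      ← LinearMap.trace_comp_comm' (Algebra.lsmul k k W y)
        (Algebra.lsmul k k W (x : H β) ∘ₗ B)]
    rfl
  | hadd X Y hX hY =>
    simp only [LinearMap.add_comp, LinearMap.comp_add, trR_add, hX, hY]

end Trace

section Modules

variable {k G : Type} [Field k] [Group G] {H : G → Type}
  [∀ γ : G, Ring (H γ)] [∀ γ : G, Algebra k (H γ)]

/-- The space `P ⊗ W` for an `H_α`-module `P` and an `H_β`-module `W`, as a type synonym
carrying the `H_γ`-module structure given by the coproduct, where `γ` is any index equal to
`αβ`. -/
def TP (_D : HopfGCoalgebra k G H) {α β γ : G} (_h : γ = α * β) (P W : Type)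
    [AddCommGroup P] [Module k P] [Module (H α) P] [IsScalarTower k (H α) P]
    [AddCommGroup W] [Module k W] [Module (H β) W] [IsScalarTower k (H β) W] : Type :=
  P ⊗[k] W

variable (D : HopfGCoalgebra k G H) {α β γ : G} (h : γ = α * β) (P W : Type)
    [AddCommGroup P] [Module k P] [Module (H α) P] [IsScalarTower k (H α) P]
    [AddCommGroup W] [Module k W] [Module (H β) W] [IsScalarTower k (H β) W]

noncomputable instance : AddCommGroup (TP D h P W) :=
  inferInstanceAs (AddCommGroup (P ⊗[k] W))

noncomputable instance : Module k (TP D h P W) := inferInstanceAs (Module k (P ⊗[k] W))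

noncomputable instance : Module (H γ) (TP D h P W) := D.tensorModule α β γ h P W

instance : IsScalarTower k (H γ) (TP D h P W) := D.tensorModuleTower α β γ h P W

instance [FiniteDimensional k P] [FiniteDimensional k W] : FiniteDimensional k (TP D h P W) :=
  inferInstanceAs (FiniteDimensional k (P ⊗[k] W))

/-- The action of `H_α ⊗ H_β` on `P ⊗ W`. -/
noncomputable def rho (α β : G) (P W : Type)
    [AddCommGroup P] [Module k P] [Module (H α) P] [IsScalarTower k (H α) P]
    [AddCommGroup W] [Module k W] [Module (H β) W] [IsScalarTower k (H β) W] :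
    H α ⊗[k] H β →ₐ[k] Module.End k (P ⊗[k] W) :=
  Module.endTensorEndAlgHom.comp
    (Algebra.TensorProduct.map (Algebra.lsmul k k P) (Algebra.lsmul k k W))

omit [Group G] in
theorem rho_tmul (x : H α) (y : H β) :
    rho α β P W (x ⊗ₜ[k] y)
      = TensorProduct.map (Algebra.lsmul k k P x) (Algebra.lsmul k k W y) := by
  ext; simp [rho, Module.endTensorEndAlgHom_apply]

variable {P W}

variable {P' W' : Type}
    [AddCommGroup P'] [Module k P'] [Module (H α) P'] [IsScalarTower k (H α) P']
    [AddCommGroup W'] [Module k W'] [Module (H β) W'] [IsScalarTower k (H β) W']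

/-- The tensor product of module maps. -/
noncomputable def TPmap (a : P →ₗ[H α] P') (c : W →ₗ[H β] W') :
    TP D h P W →ₗ[H γ] TP D h P' W' where
  toFun := TensorProduct.map (a.restrictScalars k) (c.restrictScalars k)
  map_add' := map_add _
  map_smul' x z := by
    suffices e : ∀ (u : H α ⊗[k] H β) (z : P ⊗[k] W),
        TensorProduct.map (a.restrictScalars k) (c.restrictScalars k) (rho α β P W u z)
          = rho α β P' W' u
            (TensorProduct.map (a.restrictScalars k) (c.restrictScalars k) z) from
      e (D.comul h x) z
    clear z x
    intro u z
    induction u using TensorProduct.induction_on with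
    | zero => simp
    | tmul p q =>
      rw [rho_tmul, rho_tmul]
      induction z using TensorProduct.induction_on with
      | zero => simp
      | tmul r s => simp
      | add r s hr hs => simp only [map_add, hr, hs]
    | add p q hp hq => simp only [map_add, LinearMap.add_apply, hp, hq]

/-- `x ⊗ w ↦ x₁ ⊗ a(x₂) w`. -/
noncomputable def tw (D : HopfGCoalgebra k G H) {σ α β δ : G} (h : σ = α * β)
    (a : H β →ₗ[k] H δ) (W : Type) [AddCommGroup W] [Module k W] [Module (H δ) W]
    [IsScalarTower k (H δ) W] : H σ ⊗[k] W →ₗ[k] H α ⊗[k] W :=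
  TensorProduct.map LinearMap.id
      (TensorProduct.lift ((Algebra.lsmul k k W : H δ →ₐ[k] _).toLinearMap ∘ₗ a))
    ∘ₗ (TensorProduct.assoc k _ _ _).toLinearMap
    ∘ₗ TensorProduct.map (D.comul h).toLinearMap LinearMap.id

/-- The twists by `a` and `b` cancel when `a` and `b` are convolution inverse to each other. -/
theorem tw_tw (D : HopfGCoalgebra k G H) {α β β' γ δ : G} (h₁ : γ = α * β)
    (h₂ : α = γ * β') (h₃ : (1 : G) = β * β') (a : H β →ₗ[k] H δ) (b : H β' →ₗ[k] H δ)
    (hm : ∀ y, LinearMap.mul' k (H δ) (TensorProduct.map a b (D.comul h₃ y)) = D.ε y • 1)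
    (W : Type) [AddCommGroup W] [Module k W] [Module (H δ) W] [IsScalarTower k (H δ) W] :
    tw D h₁ a W ∘ₗ tw D h₂ b W = LinearMap.id := by
  ext x w
  have key := D.comul_contract h₁ h₂ h₃ (LinearMap.mul' k (H δ) ∘ₗ TensorProduct.map a b) hm x
  have e : ∀ u : H γ ⊗[k] H β', tw D h₁ a W (TensorProduct.map LinearMap.id
        (TensorProduct.lift ((Algebra.lsmul k k W : H δ →ₐ[k] _).toLinearMap ∘ₗ b))
        (TensorProduct.assoc k _ _ _ (u ⊗ₜ w)))
      = TensorProduct.map LinearMap.id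
        ((Algebra.lsmul k k W : H δ →ₐ[k] _).toLinearMap.flip w)
        (TensorProduct.map LinearMap.id (LinearMap.mul' k (H δ) ∘ₗ TensorProduct.map a b)
        (TensorProduct.assoc k _ _ _
          (TensorProduct.map (D.comul h₁).toLinearMap LinearMap.id u))) := by
    intro u
    induction u using TensorProduct.induction_on with
    | zero => simp
    | tmul p q =>
      simp only [tw, LinearMap.comp_apply, LinearEquiv.coe_coe, TensorProduct.assoc_tmul,
        TensorProduct.map_tmul, AlgHom.toLinearMap_apply, LinearMap.id_apply]
      generalize D.comul h₁ p = v
      induction v using TensorProduct.induction_on with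
      | zero => simp
      | tmul r s => simp
      | add r s hr hs => simp only [TensorProduct.add_tmul, map_add, hr, hs]
    | add p q hp hq => simp only [TensorProduct.add_tmul, map_add, hp, hq]
  have h9 := e (D.comul h₂ x)
  rw [key] at h9
  simpa [tw] using h9

/-- The isomorphism `x ⊗ w ↦ x₁ ⊗ x₂ w` of `H_γ`-modules from the free module `H_γ ⊗ W` to
`H_α ⊗ W`. -/
noncomputable def untwist (W : Type) [AddCommGroup W] [Module k W] [Module (H β) W]
    [IsScalarTower k (H β) W] : (H γ ⊗[k] W) ≃ₗ[H γ] TP D h (H α) W where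
  toFun := tw D h LinearMap.id W
  invFun := tw D (show α = γ * β⁻¹ by subst h; simp) (D.antip (inv_inv β).symm) W
  map_add' := map_add _
  map_smul' x z := by
    change tw D h LinearMap.id W (x • z)
      = (show H α ⊗[k] W from rho α β (H α) W (D.comul h x) (tw D h LinearMap.id W z))
    induction z using TensorProduct.induction_on with
    | zero => simp
    | tmul y w =>
      rw [TensorProduct.smul_tmul']
      simp only [tw, LinearMap.comp_apply, LinearEquiv.coe_coe,
        TensorProduct.map_tmul, AlgHom.toLinearMap_apply, LinearMap.id_apply, smul_eq_mul,
        map_mul]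
      generalize D.comul h x = u
      generalize D.comul h y = v
      induction u using TensorProduct.induction_on with
      | zero => simp
      | tmul p q =>
        induction v using TensorProduct.induction_on with
        | zero => simp
        | tmul r s => simp [rho_tmul]
        | add r s hr hs => simp only [mul_add, TensorProduct.add_tmul, map_add, hr, hs]
      | add p q hp hq =>
        simp only [add_mul, TensorProduct.add_tmul, map_add, hp, hq, LinearMap.add_apply]
    | add r s hr hs => simp only [smul_add, map_add, hr, hs]
  left_inv z := by
    have := D.tw_tw (show α = γ * β⁻¹ by subst h; simp) h (inv_mul_cancel β).symm
      (D.antip (inv_inv β).symm) LinearMap.id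
      (fun y => D.antip_left (inv_mul_cancel β).symm (inv_inv β).symm y) W
    exact LinearMap.congr_fun this z
  right_inv z := by
    have := D.tw_tw h (show α = γ * β⁻¹ by subst h; simp) (mul_inv_cancel β).symm
      LinearMap.id (D.antip (inv_inv β).symm)
      (fun y => D.antip_right (mul_inv_cancel β).symm (inv_inv β).symm y) W
    exact LinearMap.congr_fun this z

instance projective_regular_TP (W : Type) [AddCommGroup W] [Module k W] [Module (H β) W]
    [IsScalarTower k (H β) W] : Module.Projective (H γ) (TP D h (H α) W) :=
  Module.Projective.of_equiv' (untwist D h W)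

/-- A finite-dimensional projective module is a direct summand of a power of the regular
module. -/
theorem exists_dual_basis {R : Type} [Ring R] [Algebra k R] (P : Type) [AddCommGroup P]
    [Module k P] [Module R P] [IsScalarTower k R P] [FiniteDimensional k P]
    [Module.Projective R P] :
    ∃ (n : ℕ) (a : Fin n → (P →ₗ[R] R)) (b : Fin n → (R →ₗ[R] P)),
      ∑ i, (b i) ∘ₗ (a i) = LinearMap.id := by
  have : Module.Finite R P := Module.Finite.of_restrictScalars_finite k R P
  obtain ⟨n, f, hf⟩ := Module.Finite.exists_fin' R P
  obtain ⟨s, hs⟩ := Module.projective_lifting_property f LinearMap.id hf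
  refine ⟨n, fun i => LinearMap.proj i ∘ₗ s, fun i => f ∘ₗ LinearMap.single R (fun _ => R) i, ?_⟩
  rw [← hs]
  ext p
  simp only [LinearMap.coe_sum, Finset.sum_apply, LinearMap.comp_apply, LinearMap.proj_apply,
    ← map_sum]
  congr 1
  exact LinearMap.sum_single_apply _ (s p)

theorem TPmap_comp {P'' W'' : Type}
    [AddCommGroup P''] [Module k P''] [Module (H α) P''] [IsScalarTower k (H α) P'']
    [AddCommGroup W''] [Module k W''] [Module (H β) W''] [IsScalarTower k (H β) W'']
    (a : P →ₗ[H α] P') (c : W →ₗ[H β] W') (a' : P' →ₗ[H α] P'') (c' : W' →ₗ[H β] W'') :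
    TPmap D h a' c' ∘ₗ TPmap D h a c = TPmap D h (a' ∘ₗ a) (c' ∘ₗ c) := by
  ext z
  exact (LinearMap.congr_fun (TensorProduct.map_comp (a'.restrictScalars k)
    (c'.restrictScalars k) (a.restrictScalars k) (c.restrictScalars k)) z).symm

theorem TPmap_id : TPmap D h (LinearMap.id : P →ₗ[H α] P) (LinearMap.id : W →ₗ[H β] W)
    = LinearMap.id := by
  ext z
  exact LinearMap.congr_fun (TensorProduct.map_id (R := k) (M := P) (N := W)) z

theorem TPmap_sum_left {ι : Type} [Fintype ι] (a : ι → (P →ₗ[H α] P')) (c : W →ₗ[H β] W') :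
    TPmap D h (∑ i, a i) c = ∑ i, TPmap D h (a i) c := by
  ext z
  rw [LinearMap.sum_apply]
  suffices e : ∀ z : P ⊗[k] W,
      TensorProduct.map ((∑ i, a i).restrictScalars k) (c.restrictScalars k) z
        = ∑ i, TensorProduct.map ((a i).restrictScalars k) (c.restrictScalars k) z from e z
  clear z
  intro z
  induction z using TensorProduct.induction_on with
  | zero => simp
  | tmul p w => simp [TensorProduct.sum_tmul]
  | add r s hr hs => simp only [map_add, hr, hs, Finset.sum_add_distrib]

theorem TPmap_sum_right {ι : Type} [Fintype ι] (a : P →ₗ[H α] P') (c : ι → (W →ₗ[H β] W')) :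
    TPmap D h a (∑ i, c i) = ∑ i, TPmap D h a (c i) := by
  ext z
  rw [LinearMap.sum_apply]
  suffices e : ∀ z : P ⊗[k] W,
      TensorProduct.map (a.restrictScalars k) ((∑ i, c i).restrictScalars k) z
        = ∑ i, TensorProduct.map (a.restrictScalars k) ((c i).restrictScalars k) z from e z
  clear z
  intro z
  induction z using TensorProduct.induction_on with
  | zero => simp
  | tmul p w => simp [TensorProduct.tmul_sum]
  | add r s hr hs => simp only [map_add, hr, hs, Finset.sum_add_distrib]

instance projective_TP [FiniteDimensional k P] [Module.Projective (H α) P] :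
    Module.Projective (H γ) (TP D h P W) := by
  obtain ⟨n, a, b, hab⟩ := exists_dual_basis (k := k) (R := H α) P
  have : Module.Projective (H γ) (Fin n → TP D h (H α) W) :=
    Module.Projective.of_equiv' (DFinsupp.linearEquivFunOnFintype (R := H γ)
      (M := fun _ : Fin n => TP D h (H α) W))
  refine Module.Projective.of_split (M := Fin n → TP D h (H α) W)
    (LinearMap.pi fun i => TPmap D h (a i) LinearMap.id)
    (∑ i, TPmap D h (b i) LinearMap.id ∘ₗ LinearMap.proj i) ?_
  rw [← TPmap_id D h (P := P) (W := W), ← hab, TPmap_sum_left]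
  ext z
  simp only [LinearMap.comp_apply, LinearMap.sum_apply, LinearMap.proj_apply,
    LinearMap.pi_apply]
  exact Finset.sum_congr rfl fun i _ => LinearMap.congr_fun (TPmap_comp D h (a i)
    (LinearMap.id : W →ₗ[H β] W) (b i) LinearMap.id) z

end Modules

end HopfGCoalgebra

/-! ### The right partial trace property -/

namespace HopfGCoalgebra

section RightTrace

variable {k G : Type} [Field k] [Group G] {H : G → Type}
  [∀ γ : G, Ring (H γ)] [∀ γ : G, Algebra k (H γ)]

theorem comp_sum' {R M N Q ι : Type} [Ring R] [AddCommGroup M] [Module R M] [AddCommGroup N]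
    [Module R N] [AddCommGroup Q] [Module R Q] [Fintype ι] (f : N →ₗ[R] Q)
    (a : ι → (M →ₗ[R] N)) : f ∘ₗ (∑ i, a i) = ∑ i, f ∘ₗ a i := by
  ext; simp

section PartialTrace

variable (D : HopfGCoalgebra k G H) {g : ∀ γ : G, (H γ)ˣ} (hg : D.IsPivot g)
    {α β γ : G} (h : γ = α * β) {P W : Type}
    [AddCommGroup P] [Module k P] [Module (H α) P] [IsScalarTower k (H α) P]
    [FiniteDimensional k P]
    [AddCommGroup W] [Module k W] [Module (H β) W] [IsScalarTower k (H β) W]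
    [FiniteDimensional k W]

include hg in
/-- The right partial trace of an `H_γ`-linear map is `H_α`-linear. In Sweedler notation
`x ⊗ 1 = Δ(x₁)(1 ⊗ S(x₂)) = (1 ⊗ S⁻¹(x₂)) Δ(x₁)`; move `Δ(x₁)` through the map and the antipode
around the trace, where the pivot turns `S` into `S⁻¹`. -/
theorem trR_linear (F : (P ⊗[k] W) →ₗ[k] (P ⊗[k] W))
    (hF : ∀ y : H γ, F ∘ₗ rho α β P W (D.comul h y) = rho α β P W (D.comul h y) ∘ₗ F)
    (x : H α) :
    trR β P W (g β : H β) F ∘ₗ Algebra.lsmul k k P x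
      = Algebra.lsmul k k P x ∘ₗ trR β P W (g β : H β) F := by
  have h₂ : α = γ * β⁻¹ := by subst h; simp
  have hS : β = β⁻¹⁻¹ := (inv_inv β).symm
  have h₃ : (1 : G) = β * β⁻¹ := (mul_inv_cancel β).symm
  let m₁ : H β ⊗[k] H β⁻¹ →ₗ[k] H β :=
    LinearMap.mul' k (H β) ∘ₗ TensorProduct.map LinearMap.id (D.antip hS)
  let m₂ : H β ⊗[k] H β⁻¹ →ₗ[k] H β :=
    LinearMap.mul' k (H β) ∘ₗ TensorProduct.map (D.antipInv g hS) LinearMap.id ∘ₗ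
      (TensorProduct.comm k _ _).toLinearMap
  have k₁ := D.comul_contract h h₂ h₃ m₁ (fun y => D.antip_right h₃ hS y) x
  have k₂ := D.comul_contract h h₂ h₃ m₂ (fun y => D.antipInv_left hg h₃ hS y) x
  let L (m : H β ⊗[k] H β⁻¹ →ₗ[k] H β) : H γ ⊗[k] H β⁻¹ →ₗ[k] H α ⊗[k] H β :=
    TensorProduct.map LinearMap.id m ∘ₗ (TensorProduct.assoc k _ _ _).toLinearMap ∘ₗ
      TensorProduct.map (D.comul h).toLinearMap LinearMap.id
  have hL₁ : ∀ p q, L m₁ (p ⊗ₜ q) = D.comul h p * (1 ⊗ₜ D.antip hS q) := by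
    intro p q
    simp only [L, LinearMap.comp_apply, LinearEquiv.coe_coe, TensorProduct.map_tmul,
      AlgHom.toLinearMap_apply, LinearMap.id_apply]
    generalize D.comul h p = v
    induction v using TensorProduct.induction_on with
    | zero => simp
    | tmul r s => simp [m₁]
    | add r s hr hs => simp only [TensorProduct.add_tmul, map_add, hr, hs, add_mul]
  have hL₂ : ∀ p q, L m₂ (p ⊗ₜ q) = (1 ⊗ₜ D.antipInv g hS q) * D.comul h p := by
    intro p q
    simp only [L, LinearMap.comp_apply, LinearEquiv.coe_coe, TensorProduct.map_tmul,
      AlgHom.toLinearMap_apply, LinearMap.id_apply]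
    generalize D.comul h p = v
    induction v using TensorProduct.induction_on with
    | zero => simp
    | tmul r s => simp [m₂]
    | add r s hr hs => simp only [TensorProduct.add_tmul, map_add, hr, hs, mul_add]
  have one (y : H β) : rho α β P W (1 ⊗ₜ y)
      = TensorProduct.map LinearMap.id (Algebra.lsmul k k W y) := by
    rw [rho_tmul, map_one]; rfl
  have key : ∀ u, trR β P W (g β : H β) (F ∘ₗ rho α β P W (L m₁ u))
      = trR β P W (g β : H β) (rho α β P W (L m₂ u) ∘ₗ F) := by
    intro u
    induction u using TensorProduct.induction_on with
    | zero => simp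
    | tmul p q =>
      rw [hL₁, hL₂, map_mul, map_mul, Module.End.mul_eq_comp, Module.End.mul_eq_comp,
        ← LinearMap.comp_assoc, hF, one, one, trR_twist, antipInv_apply, LinearMap.comp_assoc]
    | add p q hp hq =>
      simp only [map_add, LinearMap.comp_add, LinearMap.add_comp, trR_add, hp, hq]
  have fin := key (D.comul h₂ x)
  have e₁ : L m₁ (D.comul h₂ x) = x ⊗ₜ 1 := k₁
  have e₂ : L m₂ (D.comul h₂ x) = x ⊗ₜ 1 := k₂
  have eone : rho α β P W (x ⊗ₜ 1)
      = TensorProduct.map (Algebra.lsmul k k P x) LinearMap.id := by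
    rw [rho_tmul, map_one]; rfl
  rw [e₁, e₂, eone, trR_comp_right, trR_comp_left] at fin
  exact fin

/-- The right partial trace of a module endomorphism, as a module endomorphism. -/
noncomputable def trRH (f : TP D h P W →ₗ[H γ] TP D h P W) : P →ₗ[H α] P where
  toFun := trR β P W (g β : H β) (f.restrictScalars k)
  map_add' := map_add _
  map_smul' x p := LinearMap.congr_fun (D.trR_linear hg h (f.restrictScalars k)
    (fun y => LinearMap.ext fun z => f.map_smul y z) x) p

theorem trRH_restrictScalars (f : TP D h P W →ₗ[H γ] TP D h P W) :
    (D.trRH hg h f).restrictScalars k = trR β P W (g β : H β) (f.restrictScalars k) := rfl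

theorem trRH_add (f f' : TP D h P W →ₗ[H γ] TP D h P W) :
    D.trRH hg h (f + f') = D.trRH hg h f + D.trRH hg h f' := by
  ext p
  exact LinearMap.congr_fun (trR_add β P W (g β : H β) (f.restrictScalars k)
    (f'.restrictScalars k)) p

theorem trRH_sum {ι : Type} [Fintype ι] (f : ι → (TP D h P W →ₗ[H γ] TP D h P W)) :
    D.trRH hg h (∑ i, f i) = ∑ i, D.trRH hg h (f i) :=
  map_sum (AddMonoidHom.mk' (D.trRH hg h) (D.trRH_add hg h)) f Finset.univ

theorem trRH_natural {P' W' : Type}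
    [AddCommGroup P'] [Module k P'] [Module (H α) P'] [IsScalarTower k (H α) P']
    [FiniteDimensional k P']
    [AddCommGroup W'] [Module k W'] [Module (H β) W'] [IsScalarTower k (H β) W']
    [FiniteDimensional k W'] (f : TP D h P W →ₗ[H γ] TP D h P W)
    (a : P →ₗ[H α] P') (b : P' →ₗ[H α] P) (c : W →ₗ[H β] W') (d : W' →ₗ[H β] W) :
    D.trRH hg h (TPmap D h a c ∘ₗ f ∘ₗ TPmap D h b d)
      = a ∘ₗ D.trRH hg h (f ∘ₗ TPmap D h LinearMap.id (d ∘ₗ c)) ∘ₗ b := by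
  ext p
  exact LinearMap.congr_fun (trR_natural β P W P' W' (g β : H β) (f.restrictScalars k)
    (a.restrictScalars k) (b.restrictScalars k) c (d.restrictScalars k)) p

end PartialTrace

section Assoc

variable (D : HopfGCoalgebra k G H) {α β γ σ τ π : G} (h₁ : σ = α * β) (h₂ : π = σ * γ)
    (h₃ : τ = β * γ) (h₄ : π = α * τ) (P R V : Type)
    [AddCommGroup P] [Module k P] [Module (H α) P] [IsScalarTower k (H α) P]
    [AddCommGroup R] [Module k R] [Module (H β) R] [IsScalarTower k (H β) R]
    [AddCommGroup V] [Module k V] [Module (H γ) V] [IsScalarTower k (H γ) V]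

/-- The orbit map `x ↦ x p`. -/
noncomputable def orb {A : Type} [Ring A] [Algebra k A] {P : Type} [AddCommGroup P] [Module k P]
    [Module A P] [IsScalarTower k A P] (p : P) : A →ₗ[k] P :=
  (Algebra.lsmul k k P : A →ₐ[k] _).toLinearMap.flip p

omit [Group G] in
theorem rho_apply_tmul {α β : G} (P W : Type)
    [AddCommGroup P] [Module k P] [Module (H α) P] [IsScalarTower k (H α) P]
    [AddCommGroup W] [Module k W] [Module (H β) W] [IsScalarTower k (H β) W]
    (u : H α ⊗[k] H β) (p : P) (w : W) :
    rho α β P W u (p ⊗ₜ w) = TensorProduct.map (orb p) (orb w) u := by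
  induction u using TensorProduct.induction_on with
  | zero => simp
  | tmul x y => simp [rho_tmul, orb]
  | add x y hx hy => simp only [map_add, LinearMap.add_apply, hx, hy]

theorem orb_TP (p : P) (r : R) :
    (orb (show TP D h₁ P R from p ⊗ₜ[k] r) : H σ →ₗ[k] TP D h₁ P R)
      = (TensorProduct.map (orb p) (orb r) ∘ₗ (D.comul h₁).toLinearMap :
        H σ →ₗ[k] P ⊗[k] R) := by
  ext x
  exact rho_apply_tmul P R (D.comul h₁ x) p r

/-- The associator intertwines the two actions of `H_π`; on pure tensors this is coassociativity. -/
theorem assoc_smul (x : H π) (z : (P ⊗[k] R) ⊗[k] V) :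
    TensorProduct.assoc k P R V (rho σ γ (TP D h₁ P R) V (D.comul h₂ x) z)
      = rho α τ P (TP D h₃ R V) (D.comul h₄ x) (TensorProduct.assoc k P R V z) := by
  have pure : ∀ (p : P) (r : R) (v : V),
      TensorProduct.assoc k P R V (rho σ γ (TP D h₁ P R) V (D.comul h₂ x)
          ((show TP D h₁ P R from p ⊗ₜ[k] r) ⊗ₜ[k] v))
        = rho α τ P (TP D h₃ R V) (D.comul h₄ x)
          (p ⊗ₜ[k] (show TP D h₃ R V from r ⊗ₜ[k] v)) := by
      intro p r v
      have e₁ := rho_apply_tmul (TP D h₁ P R) V (D.comul h₂ x)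
        (show TP D h₁ P R from p ⊗ₜ[k] r) v
      have e₂ := rho_apply_tmul P (TP D h₃ R V) (D.comul h₄ x) p
        (show TP D h₃ R V from r ⊗ₜ[k] v)
      rw [orb_TP] at e₁ e₂
      refine (congrArg (TensorProduct.assoc k P R V) e₁).trans (Eq.trans ?_ e₂.symm)
      have n : ∀ w : (H α ⊗[k] H β) ⊗[k] H γ, TensorProduct.assoc k P R V
          (TensorProduct.map (TensorProduct.map (orb p) (orb r)) (orb v) w)
          = TensorProduct.map (orb p) (TensorProduct.map (orb r) (orb v))
            (TensorProduct.assoc k _ _ _ w) := by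
        intro w
        refine LinearMap.congr_fun (f := (TensorProduct.assoc k P R V).toLinearMap ∘ₗ
          TensorProduct.map (TensorProduct.map (orb p) (orb r)) (orb v))
          (g := TensorProduct.map (orb p) (TensorProduct.map (orb r) (orb v)) ∘ₗ
            (TensorProduct.assoc k _ _ _).toLinearMap) ?_ w
        ext; simp
      have c := D.comul_assoc h₁ h₂ h₃ h₄ x
      have l₁ : TensorProduct.map (TensorProduct.map (orb p) (orb r) ∘ₗ
          (D.comul h₁).toLinearMap) (orb v) (D.comul h₂ x)
          = TensorProduct.map (TensorProduct.map (orb p) (orb r)) (orb v)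
            (TensorProduct.map (D.comul h₁).toLinearMap LinearMap.id (D.comul h₂ x)) := by
        rw [← LinearMap.comp_apply, ← TensorProduct.map_comp, LinearMap.comp_id]
      have l₂ : TensorProduct.map (orb p) (TensorProduct.map (orb r) (orb v) ∘ₗ
          (D.comul h₃).toLinearMap) (D.comul h₄ x)
          = TensorProduct.map (orb p) (TensorProduct.map (orb r) (orb v))
            (TensorProduct.map LinearMap.id (D.comul h₃).toLinearMap (D.comul h₄ x)) := by
        rw [← LinearMap.comp_apply, ← TensorProduct.map_comp, LinearMap.comp_id]
      exact (congrArg (TensorProduct.assoc k P R V) l₁).trans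
        ((n _).trans ((congrArg _ c).trans l₂.symm))
  let R₁ := rho σ γ (TP D h₁ P R) V (D.comul h₂ x)
  let R₂ := rho α τ P (TP D h₃ R V) (D.comul h₄ x)
  let R₁' : (P ⊗[k] R) ⊗[k] V →ₗ[k] (P ⊗[k] R) ⊗[k] V := R₁
  let R₂' : P ⊗[k] (R ⊗[k] V) →ₗ[k] P ⊗[k] (R ⊗[k] V) := R₂
  have hL : (TensorProduct.assoc k P R V).toLinearMap ∘ₗ R₁'
      = R₂' ∘ₗ (TensorProduct.assoc k P R V).toLinearMap :=
    TensorProduct.ext_threefold fun p r v => pure p r v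
  exact LinearMap.congr_fun hL z

/-- The associativity isomorphism of modules. -/
noncomputable def TPassoc :
    TP D h₂ (TP D h₁ P R) V ≃ₗ[H π] TP D h₄ P (TP D h₃ R V) where
  toFun z := TensorProduct.assoc k P R V z
  invFun z := (TensorProduct.assoc k P R V).symm z
  map_add' := map_add (TensorProduct.assoc k P R V)
  map_smul' x z := D.assoc_smul h₁ h₂ h₃ h₄ P R V x z
  left_inv z := (TensorProduct.assoc k P R V).symm_apply_apply z
  right_inv z := (TensorProduct.assoc k P R V).apply_symm_apply z

/-- A linear endomorphism of `(P ⊗ R) ⊗ V`, viewed as one of `P ⊗ (R ⊗ V)`. -/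
noncomputable def assocConj (X : (P ⊗[k] R) ⊗[k] V →ₗ[k] (P ⊗[k] R) ⊗[k] V) :
    P ⊗[k] TP D h₃ R V →ₗ[k] P ⊗[k] TP D h₃ R V :=
  let Y : P ⊗[k] (R ⊗[k] V) →ₗ[k] P ⊗[k] (R ⊗[k] V) :=
    (TensorProduct.assoc k P R V).toLinearMap ∘ₗ X ∘ₗ
        (TensorProduct.assoc k P R V).symm.toLinearMap
  Y

theorem assocConj_add (X Y : (P ⊗[k] R) ⊗[k] V →ₗ[k] (P ⊗[k] R) ⊗[k] V) :
    D.assocConj h₃ P R V (X + Y) = D.assocConj h₃ P R V X + D.assocConj h₃ P R V Y :=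
  LinearMap.ext fun _ => map_add (TensorProduct.assoc k P R V) _ _

/-- The partial trace over `R ⊗ V` is the composite of those over `V` and over `R`; this uses that
the pivot is grouplike. -/
theorem trR_assoc {g : ∀ γ : G, (H γ)ˣ} (hg : D.IsPivot g)
    [FiniteDimensional k P] [FiniteDimensional k R] [FiniteDimensional k V]
    (X : (P ⊗[k] R) ⊗[k] V →ₗ[k] (P ⊗[k] R) ⊗[k] V) :
    trR τ P (TP D h₃ R V) (g τ : H τ) (D.assocConj h₃ P R V X)
      = trR β P R (g β : H β) (trR γ (P ⊗[k] R) V (g γ : H γ) X) := by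
  induction X using hom_tensor_induction with
  | hmap Y C =>
    induction Y using hom_tensor_induction with
    | hmap A B =>
      let BC : R ⊗[k] V →ₗ[k] R ⊗[k] V := TensorProduct.map B C
      let BC' : TP D h₃ R V →ₗ[k] TP D h₃ R V := BC
      have e₁ : D.assocConj h₃ P R V (TensorProduct.map (TensorProduct.map A B) C)
          = TensorProduct.map A BC' := by
        have e : (TensorProduct.assoc k P R V).toLinearMap ∘ₗ
          TensorProduct.map (TensorProduct.map A B) C ∘ₗ
          (TensorProduct.assoc k P R V).symm.toLinearMap
          = TensorProduct.map A BC := by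
          ext; simp [BC]
        exact e
      have e₂ : (Algebra.lsmul k k (TP D h₃ R V) (g τ : H τ) : TP D h₃ R V →ₗ[k] TP D h₃ R V)
          = (TensorProduct.map (Algebra.lsmul k k R (g β : H β))
            (Algebra.lsmul k k V (g γ : H γ)) : R ⊗[k] V →ₗ[k] R ⊗[k] V) := by
        rw [← rho_tmul, ← D.comul_pivot hg h₃]
        rfl
      have e₃ := trR_map τ P (TP D h₃ R V) (g τ : H τ) A BC'
      rw [e₁]
      refine e₃.trans ?_
      rw [e₂, trR_map]
      have e₄ : LinearMap.trace k (R ⊗[k] V) (TensorProduct.map (Algebra.lsmul k k R (g β : H β))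
            (Algebra.lsmul k k V (g γ : H γ)) ∘ₗ TensorProduct.map B C)
          = LinearMap.trace k R (Algebra.lsmul k k R (g β : H β) ∘ₗ B)
            * LinearMap.trace k V (Algebra.lsmul k k V (g γ : H γ) ∘ₗ C) := by
        rw [← TensorProduct.map_comp, LinearMap.trace_tensorProduct']
      have e₅ : ∀ c : k, c • TensorProduct.map A B = TensorProduct.map A (c • B) := by
        intro c; ext; simp
      rw [e₅, trR_map, LinearMap.comp_smul, map_smul, smul_eq_mul, mul_comm]
      exact congrArg (· • A) e₄
    | hadd X Y hX hY =>
      rw [TensorProduct.map_add_left, assocConj_add, trR_add, trR_add, trR_add, hX, hY]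
  | hadd X Y hX hY =>
    rw [assocConj_add, trR_add, trR_add, trR_add, hX, hY]

/-- The map `id ⊗ ε : P ⊗ H₁ → P`. -/
noncomputable def counitMap (h : α = α * 1) : TP D h P (H 1) →ₗ[H α] P where
  toFun z := TensorProduct.rid k P (TensorProduct.map LinearMap.id D.ε.toLinearMap z)
  map_add' x y := by erw [map_add, map_add]
  map_smul' x z := by
    suffices e : ∀ (u : H α ⊗[k] H 1) (z : P ⊗[k] H 1), TensorProduct.rid k P
        (TensorProduct.map LinearMap.id D.ε.toLinearMap (rho α 1 P (H 1) u z))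
        = (TensorProduct.rid k (H α) (TensorProduct.map LinearMap.id D.ε.toLinearMap u)) •
          TensorProduct.rid k P (TensorProduct.map LinearMap.id D.ε.toLinearMap z) by
      have := e (D.comul h x) z
      rw [comul_counit_right, TensorProduct.rid_tmul, one_smul] at this
      exact this
    clear z x
    intro u z
    induction u using TensorProduct.induction_on with
    | zero => simp
    | tmul p q =>
      rw [rho_tmul]
      induction z using TensorProduct.induction_on with
      | zero => simp
      | tmul r s => simp [mul_smul, smul_comm _ (D.ε s)]
      | add r s hr hs => simp only [map_add, hr, hs, smul_add]
    | add p q hp hq => simp only [map_add, LinearMap.add_apply, hp, hq, add_smul]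

theorem counitMap_surjective (h : α = α * 1) : Function.Surjective (D.counitMap P h) := by
  intro p
  refine ⟨(p ⊗ₜ[k] (1 : H 1) : P ⊗[k] H 1), ?_⟩
  change TensorProduct.rid k P (TensorProduct.map LinearMap.id D.ε.toLinearMap
    (p ⊗ₜ[k] (1 : H 1))) = p
  simp

end Assoc

section Main

variable [∀ γ : G, FiniteDimensional k (H γ)]
  (D : HopfGCoalgebra k G H) {g : ∀ γ : G, (H γ)ˣ} (hg : D.IsPivot g)
  {t : TraceData k G H} (ht : IsCyclicTrace t)
  (hreg : ∀ (α β : G) (f : TP D rfl (H α) (H β) →ₗ[H (α * β)] TP D rfl (H α) (H β)),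
    t (α * β) (TP D rfl (H α) (H β)) f = t α (H α) (D.trRH hg rfl f))

include ht hreg in
/-- The partial trace property for projective `P` and `W`, both of which are summands of powers
of regular modules. -/
theorem right_projective {α β γ : G} (h : γ = α * β) (P W : Type)
    [AddCommGroup P] [Module k P] [Module (H α) P] [IsScalarTower k (H α) P]
    [FiniteDimensional k P] [Module.Projective (H α) P]
    [AddCommGroup W] [Module k W] [Module (H β) W] [IsScalarTower k (H β) W]
    [FiniteDimensional k W] [Module.Projective (H β) W]
    (f : TP D h P W →ₗ[H γ] TP D h P W) :
    t γ (TP D h P W) f = t α P (D.trRH hg h f) := by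
  subst h
  obtain ⟨n, a, b, hab⟩ := exists_dual_basis (k := k) (R := H α) P
  obtain ⟨m, c, d, hcd⟩ := exists_dual_basis (k := k) (R := H β) W
  have hid : (LinearMap.id : TP D rfl P W →ₗ[H (α * β)] TP D rfl P W)
      = ∑ i, ∑ j, TPmap D rfl (b i) (d j) ∘ₗ TPmap D rfl (a i) (c j) := by
    rw [← TPmap_id, ← hab, TPmap_sum_left]
    refine Finset.sum_congr rfl fun i _ => ?_
    rw [← hcd, TPmap_sum_right]
    exact Finset.sum_congr rfl fun j _ => (TPmap_comp D rfl _ _ _ _).symm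
  have step : ∀ i j, t (α * β) (TP D rfl P W)
        ((TPmap D rfl (b i) (d j) ∘ₗ TPmap D rfl (a i) (c j)) ∘ₗ f)
      = t α P (D.trRH hg rfl (f ∘ₗ TPmap D rfl LinearMap.id (d j ∘ₗ c j)) ∘ₗ
          (b i ∘ₗ a i)) := by
    intro i j
    rw [LinearMap.comp_assoc, ht, hreg, LinearMap.comp_assoc, trRH_natural,
      ht, LinearMap.comp_assoc]
  calc t (α * β) (TP D rfl P W) f
      = ∑ i, ∑ j, t (α * β) (TP D rfl P W)
          ((TPmap D rfl (b i) (d j) ∘ₗ TPmap D rfl (a i) (c j)) ∘ₗ f) := by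
        have e : f = ∑ i, ∑ j,
            (TPmap D rfl (b i) (d j) ∘ₗ TPmap D rfl (a i) (c j)) ∘ₗ f := by
          ext z
          have := LinearMap.congr_fun hid (f z)
          simpa only [LinearMap.sum_apply, LinearMap.comp_apply, LinearMap.id_apply] using this
        conv_lhs => rw [e]
        simp only [map_sum]
    _ = ∑ j, ∑ i, t α P (D.trRH hg rfl (f ∘ₗ TPmap D rfl LinearMap.id (d j ∘ₗ c j)) ∘ₗ
          (b i ∘ₗ a i)) := by
        rw [Finset.sum_comm]
        simp only [step]
    _ = ∑ j, t α P (D.trRH hg rfl (f ∘ₗ TPmap D rfl LinearMap.id (d j ∘ₗ c j))) := by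
        simp only [← map_sum, ← comp_sum', hab, LinearMap.comp_id]
    _ = t α P (D.trRH hg rfl f) := by
        rw [← map_sum, ← trRH_sum, ← comp_sum', ← TPmap_sum_right, hcd, TPmap_id,
          LinearMap.comp_id]

include ht hreg in
/-- The partial trace property for arbitrary `W`: since `P` is projective, `id ⊗ ε` makes it a
summand of `P ⊗ H₁`, and then `P ⊗ W` is a summand of `P ⊗ (H₁ ⊗ W)` where `H₁ ⊗ W` is free. -/
theorem right_general {α β γ : G} (h : γ = α * β) (P W : Type)
    [AddCommGroup P] [Module k P] [Module (H α) P] [IsScalarTower k (H α) P]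
    [FiniteDimensional k P] [Module.Projective (H α) P]
    [AddCommGroup W] [Module k W] [Module (H β) W] [IsScalarTower k (H β) W]
    [FiniteDimensional k W]
    (f : TP D h P W →ₗ[H γ] TP D h P W) :
    t γ (TP D h P W) f = t α P (D.trRH hg h f) := by
  have hα : α = α * 1 := (mul_one α).symm
  have hβ : β = 1 * β := (one_mul β).symm
  obtain ⟨a, ha⟩ := Module.projective_lifting_property (D.counitMap P hα) LinearMap.id
    (D.counitMap_surjective P hα)
  let A : TP D h P W →ₗ[H γ] TP D h P (TP D hβ (H 1) W) :=
    (TPassoc D hα h hβ h P (H 1) W).toLinearMap ∘ₗ TPmap D h a LinearMap.id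
  let B : TP D h P (TP D hβ (H 1) W) →ₗ[H γ] TP D h P W :=
    TPmap D h (D.counitMap P hα) LinearMap.id ∘ₗ (TPassoc D hα h hβ h P (H 1) W).symm.toLinearMap
  have hBA : B ∘ₗ A = LinearMap.id := by
    have e : B ∘ₗ A = TPmap D h (D.counitMap P hα) LinearMap.id ∘ₗ TPmap D h a LinearMap.id := by
      ext z
      simp [A, B]
    rw [e, TPmap_comp, ha, LinearMap.id_comp, TPmap_id]
  have htr : D.trRH hg h ((A ∘ₗ f) ∘ₗ B)
      = D.trRH hg hα (a ∘ₗ D.trRH hg h f ∘ₗ D.counitMap P hα) := by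
    have e₁ := D.trR_assoc hβ P (H 1) W hg
      ((TPmap D h a (LinearMap.id : W →ₗ[H β] W) ∘ₗ f ∘ₗ
        TPmap D h (D.counitMap P hα) LinearMap.id).restrictScalars k)
    have e₂ := congrArg (fun X => X.restrictScalars k) (D.trRH_natural hg h f a
      (D.counitMap P hα) (LinearMap.id : W →ₗ[H β] W) LinearMap.id)
    rw [LinearMap.id_comp, TPmap_id, LinearMap.comp_id] at e₂
    ext p
    exact LinearMap.congr_fun (e₁.trans (congrArg (trR 1 P (H 1) (g 1 : H 1)) e₂)) p
  calc t γ (TP D h P W) f = t γ (TP D h P W) (B ∘ₗ (A ∘ₗ f)) := by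
        rw [← LinearMap.comp_assoc, hBA, LinearMap.id_comp]
    _ = t α P (D.trRH hg h ((A ∘ₗ f) ∘ₗ B)) := by
        rw [ht, D.right_projective hg ht hreg]
    _ = t α P (D.trRH hg h f) := by
        rw [htr, ← D.right_projective hg ht hreg, ht, LinearMap.comp_assoc, ha,
          LinearMap.comp_id]

end Main

end RightTrace

end HopfGCoalgebra

/-! ### The coopposite and left partial traces -/

namespace HopfGCoalgebra

section Coopposite

variable {k G : Type} [Field k] [Group G] {H : G → Type}
  [∀ γ : G, Ring (H γ)] [∀ γ : G, Algebra k (H γ)]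

/-- The family of algebras `H`, indexed by the opposite group. -/
abbrev Hop (H : G → Type) : Gᵐᵒᵖ → Type := fun γ => H γ.unop

omit [Group G] in
theorem castAlg_op {γ γ' : Gᵐᵒᵖ} (h : γ = γ') (x : H γ.unop) :
    castAlg (H := Hop H) k h x = castAlg (H := H) k (congrArg MulOpposite.unop h) x := by
  subst h; rfl

theorem castAlg_antipInv (D : HopfGCoalgebra k G H) (g : ∀ γ : G, (H γ)ˣ) {α β β' : G}
    (h : β = α⁻¹) (h' : β = β') (x : H α) :
    castAlg k h' (D.antipInv g h x) = D.antipInv g (h'.symm.trans h) x := by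
  subst h'; rfl

/-- The coopposite of a pivotal Hopf `G`-coalgebra: a Hopf coalgebra over the opposite group with
the flipped coproducts and the inverse antipode. -/
noncomputable def cop (D : HopfGCoalgebra k G H) {g : ∀ γ : G, (H γ)ˣ} (hg : D.IsPivot g) :
    HopfGCoalgebra k Gᵐᵒᵖ (Hop H) where
  Δ α β := (Algebra.TensorProduct.comm k (H β.unop) (H α.unop)).toAlgHom.comp
    (D.Δ β.unop α.unop)
  ε := D.ε
  S γ := D.antipInv g (α := γ.unop) (β := γ.unop⁻¹) rfl
  coassoc α β γ x := by
    rw [castAlg_op]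
    have key := D.comul_assoc (α := γ.unop) (β := β.unop) (γ := α.unop) rfl
      (mul_assoc γ.unop β.unop α.unop).symm rfl rfl x
    have e : ∀ w : (H γ.unop ⊗[k] H β.unop) ⊗[k] H α.unop,
        TensorProduct.map (TensorProduct.comm k _ _).toLinearMap LinearMap.id
          (TensorProduct.comm k _ _ (TensorProduct.assoc k _ _ _ w))
        = (TensorProduct.assoc k _ _ _).symm
          (TensorProduct.map LinearMap.id (TensorProduct.comm k _ _).toLinearMap
            (TensorProduct.comm k _ _ w)) := by
      intro w
      refine LinearMap.congr_fun
        (f := TensorProduct.map (TensorProduct.comm k _ _).toLinearMap LinearMap.id ∘ₗ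
          (TensorProduct.comm k _ _).toLinearMap ∘ₗ (TensorProduct.assoc k _ _ _).toLinearMap)
        (g := (TensorProduct.assoc k _ _ _).symm.toLinearMap ∘ₗ
          TensorProduct.map LinearMap.id (TensorProduct.comm k _ _).toLinearMap ∘ₗ
            (TensorProduct.comm k _ _).toLinearMap) ?_ w
      ext; simp
    have l : ∀ u : H γ.unop ⊗[k] H (β.unop * α.unop),
        TensorProduct.map ((TensorProduct.comm k _ _).toLinearMap ∘ₗ
          (D.Δ β.unop α.unop).toLinearMap) LinearMap.id (TensorProduct.comm k _ _ u)
        = TensorProduct.map (TensorProduct.comm k _ _).toLinearMap LinearMap.id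
          (TensorProduct.comm k _ _
            (TensorProduct.map LinearMap.id (D.Δ β.unop α.unop).toLinearMap u)) := by
      intro u
      induction u using TensorProduct.induction_on with
      | zero => simp
      | tmul p q => simp
      | add p q hp hq => simp only [map_add, hp, hq]
    have r : ∀ u : H (γ.unop * β.unop) ⊗[k] H α.unop,
        TensorProduct.map LinearMap.id ((TensorProduct.comm k _ _).toLinearMap ∘ₗ
          (D.Δ γ.unop β.unop).toLinearMap) (TensorProduct.comm k _ _ u)
        = TensorProduct.map LinearMap.id (TensorProduct.comm k _ _).toLinearMap
          (TensorProduct.comm k _ _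
            (TensorProduct.map (D.Δ γ.unop β.unop).toLinearMap LinearMap.id u)) := by
      intro u
      induction u using TensorProduct.induction_on with
      | zero => simp
      | tmul p q => simp
      | add p q hp hq => simp only [map_add, hp, hq]
    refine (l _).trans (Eq.trans ?_ (congrArg _ (r _)).symm)
    refine Eq.trans ?_ (e _)
    exact congrArg _ (congrArg _ key.symm)
  counit_right α x := by
    rw [castAlg_op]
    refine Eq.trans ?_ (D.counit_left α.unop x)
    change TensorProduct.rid k _ (TensorProduct.map LinearMap.id D.ε.toLinearMap
      (TensorProduct.comm k _ _ (D.Δ 1 α.unop x))) = _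
    generalize D.Δ 1 α.unop x = u
    induction u using TensorProduct.induction_on with
    | zero => simp
    | tmul p q => simp
    | add p q hp hq => simp only [map_add, hp, hq]
  counit_left α x := by
    rw [castAlg_op]
    refine Eq.trans ?_ (D.counit_right α.unop x)
    change TensorProduct.lid k _ (TensorProduct.map D.ε.toLinearMap LinearMap.id
      (TensorProduct.comm k _ _ (D.Δ α.unop 1 x))) = _
    generalize D.Δ α.unop 1 x = u
    induction u using TensorProduct.induction_on with
    | zero => simp
    | tmul p q => simp
    | add p q hp hq => simp only [map_add, hp, hq]
  antipode_left α x := by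
    have e : (castAlg (H := Hop H) k (inv_inv α)).toLinearMap ∘ₗ
        D.antipInv g (α := α.unop⁻¹) (β := α.unop⁻¹⁻¹) rfl
        = D.antipInv g (inv_inv α.unop).symm := by
      ext y
      exact (castAlg_op _ _).trans (D.castAlg_antipInv g _ _ _)
    have key := D.antipInv_left hg (α := α.unop) (β := α.unop⁻¹)
      (mul_inv_cancel α.unop).symm (inv_inv α.unop).symm
      (castAlg (H := H) k (mul_inv_cancel α.unop) x)
    have e' : D.comul (mul_inv_cancel α.unop).symm
        (castAlg (H := H) k (mul_inv_cancel α.unop) x) = D.Δ α.unop α.unop⁻¹ x :=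
      congrArg (D.Δ α.unop α.unop⁻¹) (castAlg_castAlg _ _ _)
    rw [castAlg_op]
    rw [e'] at key
    refine Eq.trans ?_ key
    exact congrArg (fun m => LinearMap.mul' k (H α.unop) (TensorProduct.map m LinearMap.id
      (TensorProduct.comm k _ _ (D.Δ α.unop α.unop⁻¹ x)))) e
  antipode_right α x := by
    have e : (castAlg (H := Hop H) k (inv_inv α)).toLinearMap ∘ₗ
        D.antipInv g (α := α.unop⁻¹) (β := α.unop⁻¹⁻¹) rfl
        = D.antipInv g (inv_inv α.unop).symm := by
      ext y
      exact (castAlg_op _ _).trans (D.castAlg_antipInv g _ _ _)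
    have key := D.antipInv_right hg (α := α.unop) (β := α.unop⁻¹)
      (inv_mul_cancel α.unop).symm (inv_inv α.unop).symm
      (castAlg (H := H) k (inv_mul_cancel α.unop) x)
    have e' : D.comul (inv_mul_cancel α.unop).symm
        (castAlg (H := H) k (inv_mul_cancel α.unop) x) = D.Δ α.unop⁻¹ α.unop x :=
      congrArg (D.Δ α.unop⁻¹ α.unop) (castAlg_castAlg _ _ _)
    rw [castAlg_op]
    rw [e'] at key
    refine Eq.trans ?_ key
    exact congrArg (fun m => LinearMap.mul' k (H α.unop) (TensorProduct.map LinearMap.id m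
      (TensorProduct.comm k _ _ (D.Δ α.unop⁻¹ α.unop x)))) e

variable (D : HopfGCoalgebra k G H) {g : ∀ γ : G, (H γ)ˣ} (hg : D.IsPivot g)

/-- The inverse of the pivot is a pivot for the coopposite. -/
theorem cop_pivot : (D.cop hg).IsPivot (fun γ => (g γ.unop)⁻¹) where
  delta α β := by
    change TensorProduct.comm k _ _ (D.Δ β.unop α.unop
      (((g (β.unop * α.unop))⁻¹ : (H (β.unop * α.unop))ˣ) : H (β.unop * α.unop))) = _
    have e : D.Δ β.unop α.unop
        (((g (β.unop * α.unop))⁻¹ : (H (β.unop * α.unop))ˣ) : H (β.unop * α.unop))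
        = (((g β.unop)⁻¹ : (H β.unop)ˣ) : H β.unop) ⊗ₜ[k]
          (((g α.unop)⁻¹ : (H α.unop)ˣ) : H α.unop) := by
      refine left_inv_eq_right_inv (a := D.Δ β.unop α.unop (g (β.unop * α.unop) : H _)) ?_ ?_
      · rw [← map_mul, Units.inv_mul, map_one]
      · rw [hg.delta, Algebra.TensorProduct.tmul_mul_tmul, Units.mul_inv, Units.mul_inv]
        rfl
    rw [e]
    rfl
  counit := by
    have e : D.ε (((g 1)⁻¹ : (H 1)ˣ) : H 1) * D.ε (g 1 : H 1) = 1 := by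
      rw [← map_mul, Units.inv_mul, map_one]
    rw [hg.counit, mul_one] at e
    exact e
  antipode α x := by
    refine (castAlg_op _ _).trans ((D.castAlg_antipInv g _ _ _).trans ?_)
    change D.antipInv g (inv_inv α.unop).symm (D.antipInv g (α := α.unop) rfl x)
      = (((g α.unop)⁻¹ : (H α.unop)ˣ) : H α.unop) * x
        * (((g α.unop)⁻¹⁻¹ : (H α.unop)ˣ) : H α.unop)
    apply D.antip_injective hg (β := α.unop⁻¹) rfl
    apply D.antip_injective hg (β := α.unop) (inv_inv α.unop).symm
    rw [D.antip_antipInv hg (inv_inv α.unop).symm rfl, D.antip_antipInv hg rfl, D.antip_antip hg]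
    simp [mul_assoc]

/-- A trace on modules over `H` is a trace on modules over the coopposite. -/
def copTrace (t : TraceData k G H) : TraceData k Gᵐᵒᵖ (Hop H) :=
  fun γ P _ _ _ _ _ _ => t γ.unop P

theorem copTrace_cyclic {t : TraceData k G H} (ht : IsCyclicTrace t) :
    IsCyclicTrace (copTrace t) :=
  fun γ P Q _ _ _ _ _ _ _ _ _ _ _ _ f f' => ht γ.unop P Q f f'

omit [Group G] in
/-- Conjugation by the flip exchanges the left and the right partial trace. -/
theorem trR_comm (β : Gᵐᵒᵖ) (P W : Type) [AddCommGroup P] [Module k P] [FiniteDimensional k P]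
    [AddCommGroup W] [Module k W] [Module (H β.unop) W] [IsScalarTower k (H β.unop) W]
    [FiniteDimensional k W] (x : H β.unop) (F : W ⊗[k] P →ₗ[k] W ⊗[k] P) :
    trR (H := Hop H) β P W x ((TensorProduct.comm k W P).toLinearMap ∘ₗ F ∘ₗ
        (TensorProduct.comm k P W).toLinearMap) = trL (H := H) β.unop W P x F := by
  induction F using hom_tensor_induction with
  | hmap B A =>
    have e : (TensorProduct.comm k W P).toLinearMap ∘ₗ TensorProduct.map B A ∘ₗ
        (TensorProduct.comm k P W).toLinearMap = TensorProduct.map A B := by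
      ext; simp
    rw [e, trR_map, trL_map]
    congr 1
    exact LinearMap.trace_comp_comm' _ _
  | hadd X Y hX hY =>
    simp only [LinearMap.add_comp, LinearMap.comp_add, trR_add, trL_add, hX, hY]

section

variable {α β γ : Gᵐᵒᵖ} (h : γ = α * β) (P W : Type)
    [AddCommGroup P] [Module k P] [Module (H α.unop) P] [IsScalarTower k (H α.unop) P]
    [AddCommGroup W] [Module k W] [Module (H β.unop) W] [IsScalarTower k (H β.unop) W]

noncomputable instance : Module (H γ.unop) (TP (D.cop hg) h P W) :=
  (D.cop hg).tensorModule α β γ h P W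

instance : IsScalarTower k (H γ.unop) (TP (D.cop hg) h P W) :=
  (D.cop hg).tensorModuleTower α β γ h P W

instance [FiniteDimensional k P] [Module.Projective (H α.unop) P] :
    Module.Projective (H γ.unop) (TP (D.cop hg) h P W) :=
  projective_TP (D.cop hg) h

end

/-- The flip is an isomorphism between the tensor product over the coopposite and the tensor
product in the other order. -/
noncomputable def flipEquiv {α β γ : Gᵐᵒᵖ} (h : γ = α * β) (h' : γ.unop = β.unop * α.unop)
    (P W : Type)
    [AddCommGroup P] [Module k P] [Module (H α.unop) P] [IsScalarTower k (H α.unop) P]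
    [AddCommGroup W] [Module k W] [Module (H β.unop) W] [IsScalarTower k (H β.unop) W] :
    TP (D.cop hg) h P W ≃ₗ[H γ.unop] TP D h' W P where
  toFun z := TensorProduct.comm k P W z
  invFun z := TensorProduct.comm k W P z
  map_add' := map_add (TensorProduct.comm k P W)
  map_smul' x z := by
    have hc : (D.cop hg).comul h x = TensorProduct.comm k _ _ (D.comul h' x) := by
      subst h; rfl
    have e : ∀ (u : H β.unop ⊗[k] H α.unop) (z : P ⊗[k] W),
        TensorProduct.comm k P W
          (rho (H := Hop H) α β P W (TensorProduct.comm k _ _ u) z)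
        = rho (H := H) β.unop α.unop W P u (TensorProduct.comm k P W z) := by
      clear z x hc
      intro u z
      induction u using TensorProduct.induction_on with
      | zero => simp
      | tmul p q =>
        rw [TensorProduct.comm_tmul, rho_tmul, rho_tmul]
        induction z using TensorProduct.induction_on with
        | zero => simp
        | tmul r s => simp
        | add r s hr hs => simp only [map_add, hr, hs]
      | add p q hp hq => simp only [map_add, LinearMap.add_apply, hp, hq]
    exact (congrArg (fun u => TensorProduct.comm k P W (rho (H := Hop H) α β P W u z)) hc).trans
      (e _ z)
  left_inv z := (TensorProduct.comm k P W).symm_apply_apply z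
  right_inv z := (TensorProduct.comm k P W).apply_symm_apply z

include hg in
/-- If the right partial trace property holds on tensor products of regular modules, then it holds
for every projective `P` and every `W`. -/
theorem right_reduction [∀ γ : G, FiniteDimensional k (H γ)] {t : TraceData k G H}
    (ht : IsCyclicTrace t)
    (hreg : ∀ (α β : G)
      (f : TP D (rfl : α * β = α * β) (H α) (H β) →ₗ[H (α * β)]
        TP D (rfl : α * β = α * β) (H α) (H β))
      (f' : H α →ₗ[H α] H α),
      f'.restrictScalars k = trR β (H α) (H β) (g β : H β) (f.restrictScalars k) →
      t (α * β) (TP D (rfl : α * β = α * β) (H α) (H β)) f = t α (H α) f') :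
    D.HasRightPartialTraceProperty g t := by
  intro α β P W _ _ _ _ _ _ _ _ _ _ _ hproj f f' hf
  have key := D.right_general hg ht (fun α β f => hreg α β f (D.trRH hg rfl f) rfl)
    (rfl : α * β = α * β) P W f
  refine Eq.trans key (congrArg _ ?_)
  ext p
  exact (LinearMap.congr_fun hf p).symm

theorem trace_conj {t : TraceData k G H} (ht : IsCyclicTrace t) {γ : G} {P Q : Type}
    [AddCommGroup P] [Module k P] [Module (H γ) P] [IsScalarTower k (H γ) P]
    [FiniteDimensional k P] [Module.Projective (H γ) P]
    [AddCommGroup Q] [Module k Q] [Module (H γ) Q] [IsScalarTower k (H γ) Q]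
    [FiniteDimensional k Q] [Module.Projective (H γ) Q]
    (e : P ≃ₗ[H γ] Q) (f : P →ₗ[H γ] P) :
    t γ Q (e.toLinearMap ∘ₗ f ∘ₗ e.symm.toLinearMap) = t γ P f := by
  rw [ht γ Q P (f ∘ₗ e.symm.toLinearMap) e.toLinearMap]
  congr 1
  ext; simp

/-- The right partial trace over the coopposite is the left partial trace of the flipped map. -/
theorem trRH_cop {α β γ : Gᵐᵒᵖ} (h : γ = α * β) (h' : γ.unop = β.unop * α.unop)
    (P W : Type)
    [AddCommGroup P] [Module k P] [Module (H α.unop) P] [IsScalarTower k (H α.unop) P]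
    [FiniteDimensional k P]
    [AddCommGroup W] [Module k W] [Module (H β.unop) W] [IsScalarTower k (H β.unop) W]
    [FiniteDimensional k W]
    (f : TP (D.cop hg) h P W →ₗ[H γ.unop] TP (D.cop hg) h P W) :
    ((D.cop hg).trRH (D.cop_pivot hg) h f).restrictScalars k
      = trL (H := H) β.unop W P (((g β.unop)⁻¹ : (H β.unop)ˣ) : H β.unop)
        ((((D.flipEquiv hg h h' P W).toLinearMap ∘ₗ f ∘ₗ
          (D.flipEquiv hg h h' P W).symm.toLinearMap).restrictScalars k :
          TP D h' W P →ₗ[k] TP D h' W P)) := by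
  refine Eq.trans ?_ (trR_comm β P W _ _)
  refine congrArg (trR (H := Hop H) β P W _) (LinearMap.ext fun z => ?_)
  refine Eq.symm (((TensorProduct.comm k P W).symm_apply_apply _).trans ?_)
  exact congrArg f ((TensorProduct.comm k P W).symm_apply_apply z)

include hg in
/-- The analogue of `right_reduction` for left partial traces: it is the right version for the
coopposite, transported along the flips. -/
theorem left_reduction [∀ γ : G, FiniteDimensional k (H γ)] {t : TraceData k G H}
    (ht : IsCyclicTrace t)
    (hreg : ∀ (α β : G)
      (f : TP D (rfl : α * β = α * β) (H α) (H β) →ₗ[H (α * β)]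
        TP D (rfl : α * β = α * β) (H α) (H β))
      (f' : H β →ₗ[H β] H β),
      f'.restrictScalars k
          = trL α (H α) (H β) (((g α)⁻¹ : (H α)ˣ) : H α) (f.restrictScalars k) →
      t (α * β) (TP D (rfl : α * β = α * β) (H α) (H β)) f = t β (H β) f') :
    D.HasLeftPartialTraceProperty g t := by
  have hcop : ∀ (α β : Gᵐᵒᵖ)
      (f : TP (D.cop hg) (rfl : α * β = α * β) (H α.unop) (H β.unop) →ₗ[H (α * β).unop]
        TP (D.cop hg) (rfl : α * β = α * β) (H α.unop) (H β.unop)),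
      copTrace t (α * β) (TP (D.cop hg) (rfl : α * β = α * β) (H α.unop) (H β.unop)) f
        = copTrace t α (H α.unop) ((D.cop hg).trRH (D.cop_pivot hg) rfl f) := by
    intro α β f
    have h₁ := hreg β.unop α.unop _ _ (D.trRH_cop hg rfl rfl (H α.unop) (H β.unop) f)
    exact (trace_conj ht (D.flipEquiv hg (rfl : α * β = α * β)
      (rfl : (α * β).unop = β.unop * α.unop) (H α.unop) (H β.unop)) f).symm.trans h₁
  have main : ∀ (α β : Gᵐᵒᵖ) (P W : Type)
      [AddCommGroup P] [Module k P] [Module (H α.unop) P] [IsScalarTower k (H α.unop) P]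
      [FiniteDimensional k P] [Module.Projective (H α.unop) P]
      [AddCommGroup W] [Module k W] [Module (H β.unop) W] [IsScalarTower k (H β.unop) W]
      [FiniteDimensional k W]
      (h' : (α * β).unop = β.unop * α.unop)
      [Module.Projective (H (α * β).unop) (TP D h' W P)]
      (f : TP D h' W P →ₗ[H (α * β).unop] TP D h' W P) (f' : P →ₗ[H α.unop] P),
      f'.restrictScalars k = trL β.unop W P (((g β.unop)⁻¹ : (H β.unop)ˣ) : H β.unop)
        (f.restrictScalars k : TP D h' W P →ₗ[k] TP D h' W P) →
      t (α * β).unop (TP D h' W P) f = t α.unop P f' := by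
    intro α β P W _ _ _ _ _ _ _ _ _ _ _ h' _ f f' hf
    let e := D.flipEquiv hg (rfl : α * β = α * β) h' P W
    let F := e.symm.toLinearMap ∘ₗ f ∘ₗ e.toLinearMap
    have hF : e.toLinearMap ∘ₗ F ∘ₗ e.symm.toLinearMap = f := by
      ext z; simp [F]
    have key := (D.cop hg).right_general (D.cop_pivot hg) (copTrace_cyclic ht) hcop
      (rfl : α * β = α * β) P W F
    have h₂ := D.trRH_cop hg (rfl : α * β = α * β) h' P W F
    have h₃ : t (α * β).unop (TP D h' W P) (e.toLinearMap ∘ₗ F ∘ₗ e.symm.toLinearMap)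
        = t (α * β).unop (TP (D.cop hg) (rfl : α * β = α * β) P W) F :=
      trace_conj (γ := (α * β).unop) ht e F
    rw [hF] at h₃
    refine h₃.trans (key.trans (congrArg (t α.unop P) (LinearMap.ext fun p => ?_)))
    refine (LinearMap.congr_fun h₂ p).trans ?_
    refine Eq.trans ?_ (LinearMap.congr_fun hf p).symm
    exact congrArg (fun X : TP D h' W P →ₗ[H (α * β).unop] TP D h' W P =>
      trL β.unop W P (((g β.unop)⁻¹ : (H β.unop)ˣ) : H β.unop)
        (X.restrictScalars k : TP D h' W P →ₗ[k] TP D h' W P) p) hF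
  intro α β P W i₁ i₂ i₃ i₄ i₅ i₆ i₇ i₈ i₉ i₁₀ i₁₁ hproj f f' hf
  exact @main (MulOpposite.op α) (MulOpposite.op β) P W i₁ i₂ i₃ i₄ i₅ i₆ i₇ i₈ i₉ i₁₀ i₁₁
    rfl hproj f f' hf

end Coopposite

end HopfGCoalgebra

open HopfGCoalgebra in
/-- Reduction Lemma: a cyclic trace on `H`-pmod is a right (resp. left) modified trace if and
only if the partial trace property holds on tensor products of regular representations. -/
theorem reduction_lemma
    {k G : Type} [Field k] [Group G] {H : G → Type}
    [∀ γ : G, Ring (H γ)] [∀ γ : G, Algebra k (H γ)] [∀ γ : G, FiniteDimensional k (H γ)]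
    (D : HopfGCoalgebra k G H) (g : ∀ γ : G, (H γ)ˣ) (hpiv : D.IsPivot g)
    (huni : D.IsUnimodular)
    (t : TraceData k G H) (ht : IsCyclicTrace t) :
    (D.IsRightModifiedTrace g t ↔
      ∀ α β : G,
        letI := D.tensorModule α β (α * β) rfl (H α) (H β)
        haveI := D.tensorModuleTower α β (α * β) rfl (H α) (H β)
        ∀ [Module.Projective (H (α * β)) (H α ⊗[k] H β)]
          (f : (H α ⊗[k] H β) →ₗ[H (α * β)] (H α ⊗[k] H β)) (f' : H α →ₗ[H α] H α),
          f'.restrictScalars k = trR β (H α) (H β) (g β : H β) (f.restrictScalars k) →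
          t (α * β) (H α ⊗[k] H β) f = t α (H α) f')
    ∧ (D.IsLeftModifiedTrace g t ↔
      ∀ α β : G,
        letI := D.tensorModule α β (α * β) rfl (H α) (H β)
        haveI := D.tensorModuleTower α β (α * β) rfl (H α) (H β)
        ∀ [Module.Projective (H (α * β)) (H α ⊗[k] H β)]
          (f : (H α ⊗[k] H β) →ₗ[H (α * β)] (H α ⊗[k] H β)) (f' : H β →ₗ[H β] H β),
          f'.restrictScalars k
              = trL α (H α) (H β) (((g α)⁻¹ : (H α)ˣ) : H α) (f.restrictScalars k) →
          t (α * β) (H α ⊗[k] H β) f = t β (H β) f') := by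
  refine ⟨⟨fun h α β => ?_, fun h => ⟨ht, D.right_reduction hpiv ht fun α β f f' hf => ?_⟩⟩,
    ⟨fun h α β => ?_, fun h => ⟨ht, D.left_reduction hpiv ht fun α β f f' hf => ?_⟩⟩⟩
  · intro _ f f' hf
    exact h.2 α β (H α) (H β) f f' hf
  · exact @h α β (projective_regular_TP D rfl (H β)) f f' hf
  · intro _ f f' hf
    exact h.2 β α (H β) (H α) f f' hf
  · exact @h α β (projective_regular_TP D rfl (H β)) f f' hf
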